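/- arXiv:2211.16402 — 8 statements merged into one kernel-verified Lean document; each statement's English description precedes it below -/
import Mathlib

section
/- For all n ≥ 3, all 0 ≤ k ≤ n, and every Boolean function f on the k-th slice of {0,1}^n, the deterministic query complexity satisfies D(f) ≤ n − 2. -/
/-- A deterministic decision tree querying variables indexed by `ι`. -/
inductive DTree (ι : Type) : Type where
  | leaf : Bool → DTree ι
  | node : ι → DTree ι → DTree ι → DTree ι

namespace DTree

/-- Evaluation of a decision tree on an input `x : ι → Bool`. -/
def eval {ι : Type} : DTree ι → (ι → Bool) → Bool
  | .leaf b, _ => b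
  | .node i t0 t1, x => if x i then eval t1 x else eval t0 x

/-- The number of queries made by a decision tree on an input. -/
def cost {ι : Type} : DTree ι → (ι → Bool) → ℕ
  | .leaf _, _ => 0
  | .node i t0 t1, x => 1 + (if x i then cost t1 x else cost t0 x)

end DTree

/-- `T` computes `f` on the domain `S`. -/
def Computes {ι : Type} (T : DTree ι) (S : Set (ι → Bool)) (f : (ι → Bool) → Bool) : Prop :=
  ∀ x ∈ S, T.eval x = f x

/-- Deterministic query complexity of `f` on the domain `S`: the least `d` such that some
decision tree computes `f` on `S` making at most `d` queries on every input in `S`. -/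
noncomputable def Dquery {ι : Type} (S : Set (ι → Bool)) (f : (ι → Bool) → Bool) : ℕ :=
  sInf {d | ∃ T : DTree ι, Computes T S f ∧ ∀ x ∈ S, T.cost x ≤ d}

/-- Hamming weight of `x : ι → Bool`. -/
def hamWeight {ι : Type} [Fintype ι] (x : ι → Bool) : ℕ :=
  (Finset.univ.filter fun i => x i = true).card

/-- The `k`-th cubeSlice: inputs of Hamming weight exactly `k`. -/
def cubeSlice (ι : Type) [Fintype ι] (k : ℕ) : Set (ι → Bool) :=
  {x | hamWeight x = k}

/-!
Query all but three coordinates. The fixed weight then determines how many of the remaining three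
coordinates are `1`; this number is at most one, or the number of `0`s is. So some value `b` is
known to occur either nowhere among the three, which determines the input, or at exactly one
position `a`, which then determines it. A Boolean function of `a` takes equal values at two of the
three positions, so querying the third position settles it.
-/

/-- Some decision tree computes `f` on the domain `S` making at most `d` queries on every input in
`S`. It replaces `Dquery S f ≤ d`, which, `Dquery` being an infimum of naturals, would also hold
if no tree computed `f`. -/
def ComputableWithin {ι : Type} (d : ℕ) (S : Set (ι → Bool)) (f : (ι → Bool) → Bool) : Prop :=
  ∃ T : DTree ι, Computes T S f ∧ ∀ x ∈ S, T.cost x ≤ d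

namespace ComputableWithin

variable {ι : Type} {d d' : ℕ} {S S' : Set (ι → Bool)} {f : (ι → Bool) → Bool}

theorem dquery_le (h : ComputableWithin d S f) : Dquery S f ≤ d :=
  Nat.sInf_le h

theorem mono_queries (h : ComputableWithin d S f) (hd : d ≤ d') : ComputableWithin d' S f :=
  let ⟨T, hT, hcost⟩ := h
  ⟨T, hT, fun x hx => (hcost x hx).trans hd⟩

theorem mono (h : ComputableWithin d S f) (hS : S' ⊆ S) : ComputableWithin d S' f :=
  let ⟨T, hT, hcost⟩ := h
  ⟨T, fun x hx => hT x (hS hx), fun x hx => hcost x (hS hx)⟩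

theorem of_forall_eq {c : Bool} (h : ∀ x ∈ S, f x = c) : ComputableWithin 0 S f :=
  ⟨.leaf c, fun x hx => (h x hx).symm, fun _ _ => le_rfl⟩

theorem of_query (i : ι) (h : ∀ b, ComputableWithin d (S ∩ {x | x i = b}) f) :
    ComputableWithin (d + 1) S f := by
  choose T hT hcost using h
  refine ⟨.node i (T false) (T true), fun x hx => ?_, fun x hx => ?_⟩
  · cases hxi : x i with
    | false => simpa [DTree.eval, hxi] using hT false x ⟨hx, hxi⟩
    | true => simpa [DTree.eval, hxi] using hT true x ⟨hx, hxi⟩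
  · cases hxi : x i with
    | false => simpa [DTree.cost, hxi, add_comm] using hcost false x ⟨hx, hxi⟩
    | true => simpa [DTree.cost, hxi, add_comm] using hcost true x ⟨hx, hxi⟩

theorem of_query_finset (t : Finset ι)
    (h : ∀ z, ComputableWithin d (S ∩ {x | Set.EqOn x z t}) f) :
    ComputableWithin (d + t.card) S f := by
  classical
  induction t using Finset.induction_on generalizing d with
  | empty => exact (h fun _ => false).mono fun x hx => ⟨hx, by simp⟩
  | insert a t hat ih =>
    have query_a : ∀ z, ComputableWithin (d + 1) (S ∩ {x | Set.EqOn x z t}) f := fun z =>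
      of_query a fun b => (h (Function.update z a b)).mono fun x ⟨⟨hxS, hxz⟩, hxa⟩ => by
        refine ⟨hxS, fun i hi => ?_⟩
        obtain rfl | hit := Finset.mem_insert.mp hi
        · simpa using hxa
        · rw [Function.update_of_ne (ne_of_mem_of_not_mem hit hat)]
          exact hxz hit
    rw [Finset.card_insert_of_notMem hat, add_comm t.card, ← add_assoc]
    exact ih query_a

theorem of_eq_comp_apply (i : ι) (g : Bool → Bool) (h : ∀ x ∈ S, f x = g (x i)) :
    ComputableWithin 1 S f :=
  of_query i fun b => of_forall_eq (c := g b) fun x ⟨hxS, hxi⟩ => (h x hxS).trans (congrArg g hxi)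

end ComputableWithin

theorem exists_forall_ne_map_eq_of_card_eq_three {α β : Type*} [Fintype β] {s : Finset α}
    (hs : s.card = 3) (hβ : Fintype.card β < 3) (g : α → β) :
    ∃ i ∈ s, ∃ c, ∀ a ∈ s, a ≠ i → g a = c := by
  classical
  obtain ⟨p, hp, q, hq, hpq, hg⟩ : ∃ p ∈ s, ∃ q ∈ s, p ≠ q ∧ g p = g q :=
    Finset.exists_ne_map_eq_of_card_lt_of_maps_to (t := Finset.univ) (hβ.trans_eq hs.symm)
      fun _ _ => Finset.mem_coe.mpr (Finset.mem_univ _)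
  obtain ⟨i, hi⟩ : ∃ i, s \ {p, q} = {i} := by
    rw [← Finset.card_eq_one, Finset.card_sdiff_of_subset (Finset.insert_subset hp (by simpa)), hs,
      Finset.card_pair hpq]
  have mem_iff : ∀ a, (a ∈ s ∧ a ∉ ({p, q} : Finset α)) ↔ a = i := fun a => by
    rw [← Finset.mem_sdiff, hi, Finset.mem_singleton]
  refine ⟨i, ((mem_iff i).mpr rfl).1, g p, fun a has hai => ?_⟩
  have ha_pair : a ∈ ({p, q} : Finset α) := by_contra fun ha => hai ((mem_iff a).mp ⟨has, ha⟩)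
  obtain rfl | rfl : a = p ∨ a = q := by simpa using ha_pair
  exacts [rfl, hg.symm]

section Slice

variable {ι : Type} {s : Finset ι} {x y z : ι → Bool}

theorem ComputableWithin.image_update [DecidableEq ι] (hs : s.card = 3) {w : ι → Bool} {b : Bool}
    (hw : ∀ i ∈ s, w i ≠ b) (f : (ι → Bool) → Bool) :
    ComputableWithin 1 ((fun a => Function.update w a b) '' s) f := by
  obtain ⟨i, his, c, hc⟩ :=
    exists_forall_ne_map_eq_of_card_eq_three hs (by simp) fun a => f (Function.update w a b)
  refine .of_eq_comp_apply i (fun v => if v = b then f (Function.update w i b) else c) ?_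
  rintro _ ⟨a, has, rfl⟩
  obtain rfl | hai := eq_or_ne a i
  · simp
  · simp [Function.update_of_ne hai.symm, hw i his, hc a has hai]

theorem eq_piecewise_filter_eq [DecidableEq ι] (hxz : Set.EqOn x z (↑s)ᶜ) (b : Bool) :
    x = {i ∈ s | x i = b}.piecewise (fun _ => b) (s.piecewise (fun _ => !b) z) := by
  ext i
  by_cases his : i ∈ s
  · by_cases hib : x i = b <;> simp [his, hib, Bool.eq_not_iff]
  · simpa [his] using hxz his

theorem card_filter_eq_true_add_card_filter_eq_false (s : Finset ι) (x : ι → Bool) :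
    {i ∈ s | x i = true}.card + {i ∈ s | x i = false}.card = s.card := by
  simpa only [Bool.not_eq_true] using s.card_filter_add_card_filter_not (x · = true)

theorem exists_card_filter_eq_le_one (hs : s.card ≤ 3) (x : ι → Bool) :
    ∃ b, {i ∈ s | x i = b}.card ≤ 1 := by
  by_contra! h
  linarith [h true, h false, card_filter_eq_true_add_card_filter_eq_false s x]

variable [Fintype ι]

theorem card_filter_eq_of_hamWeight_eq (hxy : Set.EqOn x y (↑s)ᶜ)
    (hweight : hamWeight x = hamWeight y) (b : Bool) :
    {i ∈ s | x i = b}.card = {i ∈ s | y i = b}.card := by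
  classical
  have add_compl : ∀ u : ι → Bool,
      {i ∈ s | u i = true}.card + {i ∈ sᶜ | u i = true}.card = hamWeight u := fun u => by
    simp only [hamWeight, Finset.card_filter, Finset.sum_add_sum_compl]
  have compl_eq : {i ∈ sᶜ | x i = true} = {i ∈ sᶜ | y i = true} :=
    Finset.filter_congr fun i hi => by rw [hxy (by simpa using hi)]
  have true_eq : {i ∈ s | x i = true}.card = {i ∈ s | y i = true}.card := by
    have hx := add_compl x
    rw [hweight, ← add_compl y, compl_eq] at hx
    exact Nat.add_right_cancel hx
  cases b with
  | true => exact true_eq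
  | false =>
    have hx := card_filter_eq_true_add_card_filter_eq_false s x
    rw [true_eq, ← card_filter_eq_true_add_card_filter_eq_false s y] at hx
    exact Nat.add_left_cancel hx

theorem ComputableWithin.cubeSlice_inter_eqOn_compl (hs : s.card = 3) (k : ℕ) (z : ι → Bool)
    (f : (ι → Bool) → Bool) :
    ComputableWithin 1 (cubeSlice ι k ∩ {x | Set.EqOn x z (↑s)ᶜ}) f := by
  classical
  obtain hempty | ⟨y, hyk, hyz⟩ :=
    (cubeSlice ι k ∩ {x | Set.EqOn x z (↑s)ᶜ}).eq_empty_or_nonempty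
  · rw [hempty]
    exact (of_forall_eq (c := false) fun x hx => hx.elim).mono_queries zero_le_one
  obtain ⟨b, hb⟩ := exists_card_filter_eq_le_one hs.le y
  set w := s.piecewise (fun _ => !b) z with hw
  have card_eq : ∀ x ∈ cubeSlice ι k ∩ {x | Set.EqOn x z (↑s)ᶜ},
      {i ∈ s | x i = b}.card = {i ∈ s | y i = b}.card := fun x ⟨hxk, hxz⟩ =>
    card_filter_eq_of_hamWeight_eq (hxz.trans hyz.symm) (hxk.trans hyk.symm) b
  obtain hzero | hone := Nat.le_one_iff_eq_zero_or_eq_one.mp hb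
  · refine (of_forall_eq (c := f w) fun x hx => ?_).mono_queries zero_le_one
    have hx_empty := Finset.card_eq_zero.mp ((card_eq x hx).trans hzero)
    rw [eq_piecewise_filter_eq hx.2 b, hx_empty, Finset.piecewise_empty]
  · refine (image_update hs (w := w) (b := b) (fun i hi => by simp [hw, hi]) f).mono fun x hx => ?_
    obtain ⟨a, ha⟩ := Finset.card_eq_one.mp ((card_eq x hx).trans hone)
    refine ⟨a, (Finset.mem_filter.mp (ha ▸ Finset.mem_singleton_self a)).1, ?_⟩
    rw [eq_piecewise_filter_eq hx.2 b, ha, Finset.piecewise_singleton]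

theorem stmt1_general (hι : 3 ≤ Fintype.card ι) (k : ℕ) (f : (ι → Bool) → Bool) :
    Dquery (cubeSlice ι k) f ≤ Fintype.card ι - 2 := by
  classical
  obtain ⟨s, -, hs⟩ := Finset.exists_subset_card_eq (s := Finset.univ) hι
  have h : ComputableWithin (1 + sᶜ.card) (cubeSlice ι k) f :=
    .of_query_finset sᶜ fun z => by
      simpa only [Finset.coe_compl] using .cubeSlice_inter_eqOn_compl hs k z f
  have hcard : 1 + sᶜ.card = Fintype.card ι - 2 := by
    rw [Finset.card_compl, hs]
    omega
  exact hcard ▸ h.dquery_le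

end Slice

/-- For `n ≥ 3` and `0 ≤ k ≤ n`, every Boolean function on the `k`-th slice of `{0,1}^n`
has deterministic query complexity at most `n - 2`. -/
theorem stmt1 (n k : ℕ) (hn : 3 ≤ n) (hk : k ≤ n) (f : (Fin n → Bool) → Bool) :
    Dquery (cubeSlice (Fin n) k) f ≤ n - 2 := by
  simpa using stmt1_general (ι := Fin n) (by simpa using hn) k f
end

section
/- For every Boolean function f on the weight-2 slice of {0,1}^n, D(f) ≥ n − m(G_f), where G_f is the graph on vertex set [n] whose edges are the pairs {i,j} with f({i,j}) = 1, and m(G_f) is the size of the largest clique or independent set of G_f. -/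
/-- The input in the weight-2 slice whose 1-positions are `i` and `j`. -/
def pairInput {n : ℕ} (i j : Fin n) : Fin n → Bool :=
  fun t => decide (t = i ∨ t = j)

/-- `s` is monochromatic for the graph `G_f` associated to `f` on the weight-2 slice:
it is a clique or an independent set of `G_f`. -/
def IsMonoSet {n : ℕ} (f : (Fin n → Bool) → Bool) (s : Finset (Fin n)) : Prop :=
  (∀ i ∈ s, ∀ j ∈ s, i ≠ j → f (pairInput i j) = true) ∨
    (∀ i ∈ s, ∀ j ∈ s, i ≠ j → f (pairInput i j) = false)

/-- `m(G_f)`: the size of the largest clique or independent set of `G_f`. -/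
noncomputable def mG {n : ℕ} (f : (Fin n → Bool) → Bool) : ℕ :=
  sSup {m | ∃ s : Finset (Fin n), IsMonoSet f s ∧ s.card = m}

/-!
The adversary answers `0` to every query, so that the candidate set of 1-positions loses at most one
element per query. It stops when the tree reaches a leaf, and then the output is constant on
the weight-`k` inputs supported in the candidate set, or when only `k` candidates are left, and then
there is just one such input. In both cases `f` is constant on these inputs, and the number of
queries made on any of them is at least the number of discarded candidates.
-/

/-- The subcube of inputs all of whose 1-positions lie in `s`. The adversary keeps the set of inputs
consistent with its answers in this form. -/
def supportedIn {ι : Type} (s : Finset ι) : Set (ι → Bool) :=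
  {x | ∀ i, x i = true → i ∈ s}

/-- `s` is homogeneous, in the sense of Ramsey theory, for the 2-colouring of the `k`-subsets of `ι`
given by `f` on the `k`-th slice. Sets with fewer than `k` elements are homogeneous. For `k = 2`
these are the cliques and the independent sets. -/
def IsSliceHomogeneous {ι : Type} [Fintype ι] (f : (ι → Bool) → Bool) (k : ℕ) (s : Finset ι) :
    Prop :=
  (f '' (cubeSlice ι k ∩ supportedIn s)).Subsingleton

section Supported

variable {ι : Type} {s : Finset ι} {x : ι → Bool}

theorem eq_false_of_mem_supportedIn {i : ι} (hx : x ∈ supportedIn s) (hi : i ∉ s) :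
    x i = false :=
  Bool.eq_false_iff.2 (mt (hx i) hi)

variable [Fintype ι] {k : ℕ}

theorem eq_true_iff_mem_of_card_le (hxk : x ∈ cubeSlice ι k) (hxs : x ∈ supportedIn s)
    (hs : s.card ≤ k) (i : ι) : x i = true ↔ i ∈ s := by
  have hsub : Finset.univ.filter (fun i => x i = true) ⊆ s := fun i hi =>
    hxs i (Finset.mem_filter.1 hi).2
  have heq : Finset.univ.filter (fun i => x i = true) = s :=
    Finset.eq_of_subset_of_card_le hsub (hs.trans hxk.ge)
  simp [← heq]

theorem subsingleton_cubeSlice_inter_supportedIn (hs : s.card ≤ k) :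
    (cubeSlice ι k ∩ supportedIn s).Subsingleton := fun _ hx _ hy =>
  funext fun i => Bool.eq_iff_iff.2 <|
    (eq_true_iff_mem_of_card_le hx.1 hx.2 hs i).trans
      (eq_true_iff_mem_of_card_le hy.1 hy.2 hs i).symm

theorem nonempty_cubeSlice_inter_supportedIn (hs : k ≤ s.card) :
    (cubeSlice ι k ∩ supportedIn s).Nonempty := by
  classical
  obtain ⟨t, hts, htk⟩ := Finset.exists_subset_card_eq hs
  refine ⟨fun i => decide (i ∈ t), ?_, fun i hi => hts (of_decide_eq_true hi)⟩
  simpa [cubeSlice, hamWeight] using htk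

end Supported

namespace IsSliceHomogeneous

variable {ι : Type} [Fintype ι] {f g : (ι → Bool) → Bool} {k : ℕ} {s : Finset ι}

theorem of_card_le (hs : s.card ≤ k) : IsSliceHomogeneous f k s :=
  (subsingleton_cubeSlice_inter_supportedIn hs).image f

theorem congr (hf : IsSliceHomogeneous f k s)
    (hfg : Set.EqOn f g (cubeSlice ι k ∩ supportedIn s)) : IsSliceHomogeneous g k s := by
  rwa [IsSliceHomogeneous, ← hfg.image_eq]

end IsSliceHomogeneous

namespace DTree

variable {ι : Type}

section Node

variable {i : ι} {t₀ t₁ : DTree ι} {x : ι → Bool}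

theorem eval_node_of_eq_false (hx : x i = false) : (node i t₀ t₁).eval x = t₀.eval x := by
  simp [eval, hx]

theorem eval_node_of_eq_true (hx : x i = true) : (node i t₀ t₁).eval x = t₁.eval x := by
  simp [eval, hx]

theorem cost_node_of_eq_false (hx : x i = false) :
    (node i t₀ t₁).cost x = t₀.cost x + 1 := by
  simp [cost, hx, add_comm]

end Node

theorem exists_eval_eq_of_eqOn_compl (f : (ι → Bool) → Bool) (s : Finset ι) (y : ι → Bool) :
    ∃ T : DTree ι, ∀ x, (∀ i ∉ s, x i = y i) → T.eval x = f x := by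
  classical
  induction s using Finset.induction_on generalizing y with
  | empty =>
    exact ⟨leaf (f y), fun x hx => congrArg f (funext fun i => (hx i (Finset.notMem_empty i)).symm)⟩
  | insert v s _ ih =>
    choose T hT using fun b => ih (Function.update y v b)
    have hagree : ∀ x : ι → Bool, (∀ i ∉ insert v s, x i = y i) →
        ∀ i ∉ s, x i = Function.update y v (x v) i := by
      intro x hx i hi
      obtain rfl | hiv := eq_or_ne i v
      · rw [Function.update_self]
      · rw [Function.update_of_ne hiv, hx i (by simp [hiv, hi])]
    refine ⟨node v (T false) (T true), fun x hx => ?_⟩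
    have heval := hT (x v) x (hagree x hx)
    cases hv : x v with
    | false => rwa [eval_node_of_eq_false hv, ← hv]
    | true => rwa [eval_node_of_eq_true hv, ← hv]

theorem exists_computes [Finite ι] (S : Set (ι → Bool)) (f : (ι → Bool) → Bool) :
    ∃ T : DTree ι, Computes T S f := by
  cases nonempty_fintype ι
  obtain ⟨T, hT⟩ := exists_eval_eq_of_eqOn_compl f Finset.univ fun _ => false
  exact ⟨T, fun x _ => hT x fun i hi => absurd (Finset.mem_univ i) hi⟩

theorem exists_computes_and_cost_le_Dquery [Finite ι] (S : Set (ι → Bool))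
    (f : (ι → Bool) → Bool) :
    ∃ T : DTree ι, Computes T S f ∧ ∀ x ∈ S, T.cost x ≤ Dquery S f := by
  obtain ⟨T, hT⟩ := exists_computes S f
  obtain ⟨d, hd⟩ := (Set.finite_range T.cost).bddAbove
  exact Nat.sInf_mem (s := {d | ∃ T : DTree ι, Computes T S f ∧ ∀ x ∈ S, T.cost x ≤ d})
    ⟨d, T, hT, fun x _ => hd ⟨x, rfl⟩⟩

theorem exists_isSliceHomogeneous_eval [Fintype ι] (T : DTree ι) {k : ℕ} {r : Finset ι}
    (hr : k ≤ r.card) :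
    ∃ s ⊆ r, k ≤ s.card ∧ IsSliceHomogeneous T.eval k s ∧
      ∀ x ∈ supportedIn s, r.card ≤ T.cost x + s.card := by
  classical
  induction T generalizing r with
  | leaf b =>
    have hconst : IsSliceHomogeneous (leaf b).eval k r := by
      rintro _ ⟨_, _, rfl⟩ _ ⟨_, _, rfl⟩
      rfl
    exact ⟨r, subset_rfl, hr, hconst, fun _ _ => Nat.le_add_left _ _⟩
  | node v t₀ t₁ ih₀ _ =>
    obtain hrk | hkr := hr.eq_or_lt'
    · exact ⟨r, subset_rfl, hr, .of_card_le hrk.le, fun _ _ => Nat.le_add_left _ _⟩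
    have herase : r.card ≤ (r.erase v).card + 1 :=
      Nat.le_add_of_sub_le Finset.pred_card_le_card_erase
    obtain ⟨s, hsr, hks, hhom, hcost⟩ := ih₀ (r := r.erase v) (by omega)
    have hzero : ∀ x ∈ supportedIn s, x v = false := fun x hx =>
      eq_false_of_mem_supportedIn hx fun hv => Finset.notMem_erase v r (hsr hv)
    refine ⟨s, hsr.trans (Finset.erase_subset v r), hks, ?_, fun x hx => ?_⟩
    · exact hhom.congr fun x hx => (eval_node_of_eq_false (hzero x hx.2)).symm
    · rw [cost_node_of_eq_false (hzero x hx)]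
      have := hcost x hx
      omega

end DTree

section Pairs

variable {n : ℕ} {f : (Fin n → Bool) → Bool} {s : Finset (Fin n)} {i j : Fin n}

theorem pairInput_mem_cubeSlice (hij : i ≠ j) : pairInput i j ∈ cubeSlice (Fin n) 2 := by
  have hones : Finset.univ.filter (fun t => pairInput i j t = true) = {i, j} := by
    ext t
    simp [pairInput]
  exact (congrArg Finset.card hones).trans (Finset.card_pair hij)

theorem pairInput_mem_supportedIn (hi : i ∈ s) (hj : j ∈ s) : pairInput i j ∈ supportedIn s := by
  intro t ht
  obtain rfl | rfl := of_decide_eq_true ht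
  exacts [hi, hj]

theorem IsSliceHomogeneous.isMonoSet (hs : IsSliceHomogeneous f 2 s) : IsMonoSet f s := by
  have hmem : ∀ i ∈ s, ∀ j ∈ s, i ≠ j →
      f (pairInput i j) ∈ f '' (cubeSlice (Fin n) 2 ∩ supportedIn s) := fun i hi j hj hij =>
    Set.mem_image_of_mem f ⟨pairInput_mem_cubeSlice hij, pairInput_mem_supportedIn hi hj⟩
  refine or_iff_not_imp_right.2 fun hedge i hi j hj hij => ?_
  push Not at hedge
  obtain ⟨a, ha, b, hb, hab, hfab⟩ := hedge
  rw [hs (hmem i hi j hj hij) (hmem a ha b hb hab)]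
  exact Bool.eq_true_of_not_eq_false hfab

theorem IsMonoSet.card_le_mG (hs : IsMonoSet f s) : s.card ≤ mG f := by
  refine le_csSup ⟨Fintype.card (Fin n), ?_⟩ ⟨s, hs, rfl⟩
  rintro _ ⟨t, _, rfl⟩
  exact t.card_le_univ

end Pairs

theorem stmt2_general {ι : Type} [Fintype ι] (k : ℕ) (f : (ι → Bool) → Bool) :
    ∃ s : Finset ι, IsSliceHomogeneous f k s ∧
      Fintype.card ι - s.card ≤ Dquery (cubeSlice ι k) f := by
  obtain hk | hk := lt_or_ge (Fintype.card ι) k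
  · exact ⟨Finset.univ, .of_card_le hk.le, by simp⟩
  obtain ⟨T, hT, hcost⟩ := DTree.exists_computes_and_cost_le_Dquery (cubeSlice ι k) f
  obtain ⟨s, -, hks, hhom, hle⟩ := T.exists_isSliceHomogeneous_eval (r := Finset.univ) hk
  obtain ⟨x, hxk, hxs⟩ := nonempty_cubeSlice_inter_supportedIn hks
  refine ⟨s, hhom.congr fun y hy => hT y hy.1, ?_⟩
  exact (Nat.sub_le_of_le_add (hle x hxs)).trans (hcost x hxk)

/-- For every Boolean function `f` on the weight-2 slice of `{0,1}^n`,
`D(f) ≥ n - m(G_f)`. -/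
theorem stmt2 (n : ℕ) (f : (Fin n → Bool) → Bool) :
    n - mG f ≤ Dquery (cubeSlice (Fin n) 2) f := by
  obtain ⟨s, hs, hle⟩ := stmt2_general 2 f
  exact (Nat.sub_le_sub_left hs.isMonoSet.card_le_mG n).trans (by rwa [Fintype.card_fin] at hle)
end

section
/- Let k ≥ 1 and let EQ be the equality function on the balanced slice of {0,1}^{4k}, defined on pairs (x,y) with x, y ∈ {0,1}^{2k} and |x| + |y| = 2k by EQ(x,y) = 1 if and only if x = y. Then D(EQ) = 3k − 1. -/
/-- The equality function on `{0,1}^{4k}`: on input `(x, y)` with `x, y ∈ {0,1}^{2k}`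
(the first and last `2k` bits), it outputs `1` iff `x = y`. -/
def EQfun (k : ℕ) (z : Fin (4 * k) → Bool) : Bool :=
  decide (∀ i : Fin (2 * k),
    z ⟨i.1, by omega⟩ = z ⟨2 * k + i.1, by omega⟩)

/-!
The argument is carried out for an arbitrary map `π : ι → α` all of whose fibers have `m ≥ 2`
elements, where `α` has `2 * k` elements; the equality function asks whether the input is constant
on the fibers of `π`.

*Lower bound.* The adversary answers as if the input were constant on the fibers, and colors each
newly touched fiber so that the numbers of touched fibers of the two colors differ by at most one.
A tree that accepts must have read all `m * k` coordinates of some color, since otherwise swapping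
an unread `1` with an unread `0` would produce an unequal input on the same path. All `k` fibers
of that color are then touched, so at least `k - 1` fibers of the other color are touched too.

*Upper bound.* Read one coordinate in all fibers but one. On an equal input the color not used by
the skipped fiber is seen exactly `k` times. It then suffices to read the other `(m - 1) * k`
coordinates of those `k` fibers: if they all have this color, no coordinate of this
color is left for the remaining fibers.
-/

open Finset Function

variable {ι α : Type}

/-- `f` is computed on the domain `S` by a decision tree making at most `d` queries, so that
`Dquery S f` is the least `d` with `QueryComputable S f d`. -/
def QueryComputable (S : Set (ι → Bool)) (f : (ι → Bool) → Bool) (d : ℕ) : Prop :=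
  ∃ T : DTree ι, Computes T S f ∧ ∀ x ∈ S, T.cost x ≤ d

namespace QueryComputable

variable {S S' : Set (ι → Bool)} {f : (ι → Bool) → Bool} {d : ℕ}

lemma mono (h : QueryComputable S f d) (hS : S' ⊆ S) : QueryComputable S' f d := by
  obtain ⟨T, hT, hcost⟩ := h
  exact ⟨T, fun x hx ↦ hT x (hS hx), fun x hx ↦ hcost x (hS hx)⟩

lemma of_forall_eq {b : Bool} (h : ∀ x ∈ S, f x = b) : QueryComputable S f d :=
  ⟨.leaf b, fun x hx ↦ (h x hx).symm, fun _ _ ↦ Nat.zero_le d⟩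

lemma of_query (i : ι) (h : ∀ b, QueryComputable {x ∈ S | x i = b} f d) :
    QueryComputable S f (d + 1) := by
  choose T hT hcost using h
  refine ⟨.node i (T false) (T true), fun x hx ↦ ?_, fun x hx ↦ ?_⟩
  · rw [← hT (x i) x ⟨hx, rfl⟩, DTree.eval]
    cases x i <;> rfl
  · have hle := hcost (x i) x ⟨hx, rfl⟩
    rw [DTree.cost, add_comm]
    gcongr
    cases hi : x i <;> simpa [hi] using hle

lemma of_queries (Q : Finset ι)
    (h : ∀ y : ι → Bool, QueryComputable {x ∈ S | ∀ i ∈ Q, x i = y i} f d) :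
    QueryComputable S f (d + #Q) := by
  classical
  induction Q using Finset.induction_on generalizing S with
  | empty => exact (h fun _ ↦ false).mono fun x hx ↦ ⟨hx, by simp⟩
  | insert i Q hi ih =>
    rw [card_insert_of_notMem hi, ← add_assoc]
    refine of_query i fun b ↦ ih fun y ↦ (h (update y i b)).mono ?_
    rintro x ⟨⟨hx, hxi⟩, hxQ⟩
    refine ⟨hx, forall_mem_insert .. |>.2 ⟨by rw [hxi, update_self], fun j hj ↦ ?_⟩⟩
    rw [hxQ j hj, update_of_ne (ne_of_mem_of_not_mem hj hi)]

end QueryComputable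

namespace DTree

/-- The tree `T` with every query `i` renamed to `π i`. Running it on `x` amounts to running `T` on
`x ∘ π`, i.e. to running `T` on an input that is constant on the fibers of `π`. -/
def map (π : ι → α) : DTree ι → DTree α
  | .leaf b => .leaf b
  | .node i t0 t1 => .node (π i) (t0.map π) (t1.map π)

section Queried

variable [DecidableEq ι] [DecidableEq α]

/-- The set of coordinates that a decision tree reads on input `x`. -/
def queried : DTree ι → (ι → Bool) → Finset ι
  | .leaf _, _ => ∅
  | .node i t0 t1, x => insert i (if x i then t1.queried x else t0.queried x)

lemma card_queried_le_cost (T : DTree ι) (x : ι → Bool) : #(T.queried x) ≤ T.cost x := by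
  induction T with
  | leaf => simp [queried]
  | node i t0 t1 ih0 ih1 =>
    rw [queried, cost, add_comm]
    refine (card_insert_le _ _).trans (Nat.add_le_add_right ?_ 1)
    split_ifs
    exacts [ih1, ih0]

lemma eval_congr (T : DTree ι) {x y : ι → Bool} (h : ∀ i ∈ T.queried x, x i = y i) :
    T.eval x = T.eval y := by
  induction T with
  | leaf => rfl
  | node i t0 t1 ih0 ih1 =>
    rw [queried, forall_mem_insert] at h
    obtain ⟨hi, h⟩ := h
    rw [eval, eval, ← hi]
    split_ifs at h ⊢
    exacts [ih1 h, ih0 h]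

lemma queried_map (π : ι → α) (T : DTree ι) (x : α → Bool) :
    (T.map π).queried x = (T.queried (x ∘ π)).image π := by
  induction T with
  | leaf => rfl
  | node i t0 t1 ih0 ih1 =>
    rw [map, queried, queried, image_insert, ih0, ih1, apply_ite (image π), comp_apply]

end Queried

end DTree

section Slice

variable [Fintype ι]

lemma card_filter_eq_of_mem_cubeSlice {w : ℕ} (hι : Fintype.card ι = 2 * w) {z : ι → Bool}
    (hz : z ∈ cubeSlice ι w) (c : Bool) : #{i | z i = c} = w := by
  have htrue : #{i | z i = true} = w := hz
  have hsum := card_filter_add_card_filter_not (s := univ) fun i ↦ z i = true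
  rw [card_univ, hι] at hsum
  simp only [Bool.not_eq_true] at hsum
  cases c <;> lia

lemma comp_perm_mem_cubeSlice {w : ℕ} {z : ι → Bool} (hz : z ∈ cubeSlice ι w)
    (e : Equiv.Perm ι) : z ∘ e ∈ cubeSlice ι w := by
  rw [← show hamWeight z = w from hz]
  exact card_equiv e (by simp)

variable [DecidableEq α] {π : ι → α} {m : ℕ}

lemma card_filter_apply_mem (hπ : ∀ a, #{i | π i = a} = m) (A : Finset α) :
    #{i | π i ∈ A} = m * #A := by
  rw [card_eq_sum_card_fiberwise (t := A) (f := π) (by simp [Set.MapsTo]), mul_comm]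
  refine sum_const_nat fun a ha ↦ ?_
  rw [← hπ a, filter_filter]
  congr 1
  grind

lemma card_eq_mul_card [Fintype α] (hπ : ∀ a, #{i | π i = a} = m) :
    Fintype.card ι = m * Fintype.card α := by
  simpa using card_filter_apply_mem hπ univ

lemma comp_mem_cubeSlice [Fintype α] (hπ : ∀ a, #{i | π i = a} = m) {w : ℕ} {x : α → Bool}
    (hx : x ∈ cubeSlice α w) : x ∘ π ∈ cubeSlice ι (m * w) := by
  rw [← show hamWeight x = w from hx]
  simpa using! card_filter_apply_mem hπ {a | x a = true}

end Slice

section Adversary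

/-- Among the coordinates in `D`, the numbers of zeros and ones of `x` differ by at most one. -/
def BalancedOn (x : α → Bool) (D : Finset α) : Prop :=
  ∀ c, #{a ∈ D | x a = c} ≤ #{a ∈ D | x a = !c} + 1

namespace BalancedOn

variable {D : Finset α} {x y : α → Bool}

lemma congr (h : BalancedOn y D) (hxy : ∀ a ∈ D, x a = y a) : BalancedOn x D := fun c ↦ by
  have hfilter (b : Bool) : {a ∈ D | x a = b} = {a ∈ D | y a = b} :=
    filter_congr fun a ha ↦ by rw [hxy a ha]
  rw [hfilter, hfilter]
  exact h c

lemma exists_insert [DecidableEq α] (h : BalancedOn y D) (a : α) :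
    ∃ x, (∀ b ∈ D, x b = y b) ∧ BalancedOn x (insert a D) := by
  by_cases ha : a ∈ D
  · exact ⟨y, fun _ _ ↦ rfl, by rwa [insert_eq_of_mem ha]⟩
  obtain ⟨c, hc⟩ : ∃ c, #{b ∈ D | y b = c} ≤ #{b ∈ D | y b = !c} := by
    rcases le_total #{b ∈ D | y b = true} #{b ∈ D | y b = false} with hle | hle
    exacts [⟨true, hle⟩, ⟨false, hle⟩]
  have heq : ∀ b ∈ D, update y a c b = y b := fun b hb ↦
    update_of_ne (ne_of_mem_of_not_mem hb ha) c y
  have hcount (e : Bool) : #{b ∈ insert a D | update y a c b = e} =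
      #{b ∈ D | y b = e} + if c = e then 1 else 0 := by
    rw [filter_insert, update_self, filter_congr fun b hb ↦ by rw [heq b hb]]
    split_ifs <;> simp [ha]
  refine ⟨update y a c, heq, fun e ↦ ?_⟩
  rw [hcount, hcount]
  have := h e
  by_cases he : c = e
  · subst he
    simpa using hc
  · simp only [he, if_false, add_zero]
    lia

lemma exists_mem_cubeSlice [Fintype α] {k : ℕ} (hα : Fintype.card α = 2 * k)
    (h : BalancedOn y D) : ∃ x ∈ cubeSlice α k, ∀ a ∈ D, x a = y a := by
  classical
  have hsum := card_filter_add_card_filter_not (s := D) fun a ↦ y a = true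
  simp only [Bool.not_eq_true] at hsum
  have hD : #D ≤ 2 * k := hα ▸ card_le_univ D
  have htrue := h true
  have hfalse := h false
  simp only [Bool.not_true, Bool.not_false] at htrue hfalse
  have hcompl := card_compl {a ∈ D | y a = false}
  obtain ⟨C, htrueC, hCfalse, hC⟩ : ∃ C, {a ∈ D | y a = true} ⊆ C ∧
      C ⊆ ({a ∈ D | y a = false} : Finset α)ᶜ ∧ #C = k :=
    exists_subsuperset_card_eq (fun a ha ↦ by simp_all) (by lia) (by lia)
  refine ⟨fun a ↦ decide (a ∈ C), by simpa [cubeSlice, hamWeight] using hC, fun a ha ↦ ?_⟩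
  have h1 := @htrueC a
  have h0 := @hCfalse a
  cases hy : y a <;> simp_all

end BalancedOn

lemma DTree.exists_balancedOn_queried [Fintype α] [DecidableEq α] (T : DTree α) {k : ℕ}
    (hα : Fintype.card α = 2 * k) {D : Finset α} {y : α → Bool} (hy : BalancedOn y D) :
    ∃ x ∈ cubeSlice α k, (∀ a ∈ D, x a = y a) ∧ BalancedOn x (D ∪ T.queried x) := by
  induction T generalizing D y with
  | leaf =>
    obtain ⟨x, hx, hxy⟩ := hy.exists_mem_cubeSlice hα
    exact ⟨x, hx, hxy, by simpa [queried] using hy.congr hxy⟩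
  | node a t0 t1 ih0 ih1 =>
    obtain ⟨y', hy'y, hy'⟩ := hy.exists_insert a
    obtain ⟨x, hx, hxy', hbal⟩ : ∃ x ∈ cubeSlice α k, (∀ b ∈ insert a D, x b = y' b) ∧
        BalancedOn x (insert a D ∪ (if y' a then t1.queried x else t0.queried x)) := by
      split_ifs
      exacts [ih1 hy', ih0 hy']
    rw [forall_mem_insert] at hxy'
    refine ⟨x, hx, fun b hb ↦ (hxy'.2 b hb).trans (hy'y b hb), ?_⟩
    rwa [queried, hxy'.1, union_insert, ← insert_union]

end Adversary

/-- The equality function attached to a partition of the coordinates into the fibers of `π`: it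
accepts `z` iff `z` is constant on each fiber. -/
noncomputable def fiberEq (π : ι → α) (z : ι → Bool) : Bool :=
  open Classical in decide (z.FactorsThrough π)

lemma fiberEq_eq_true_iff {π : ι → α} {z : ι → Bool} :
    fiberEq π z = true ↔ z.FactorsThrough π := by
  simp [fiberEq]

section LowerBound

variable [Fintype ι] {π : ι → α}

lemma exists_forall_mem_queried_of_computes [DecidableEq ι] {w : ℕ} (hπ : ∀ i, ∃ j ≠ i, π j = π i)
    {T : DTree ι} (hT : Computes T (cubeSlice ι w) (fiberEq π)) {z : ι → Bool}
    (hz : z ∈ cubeSlice ι w) (hzπ : z.FactorsThrough π) :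
    ∃ c, ∀ i, z i = c → i ∈ T.queried z := by
  by_contra! hunread
  obtain ⟨i, hi, hiT⟩ := hunread true
  obtain ⟨j, hj, hjT⟩ := hunread false
  have hagree : ∀ a ∈ T.queried z, z a = (z ∘ Equiv.swap i j) a := fun a ha ↦ by
    rw [comp_apply, Equiv.swap_apply_of_ne_of_ne (ne_of_mem_of_not_mem ha hiT)
      (ne_of_mem_of_not_mem ha hjT)]
  have hswap : (z ∘ Equiv.swap i j).FactorsThrough π := by
    rw [← fiberEq_eq_true_iff, ← hT _ (comp_perm_mem_cubeSlice hz _), ← T.eval_congr hagree,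
      hT z hz, fiberEq_eq_true_iff]
    exact hzπ
  obtain ⟨i', hi'i, hi'π⟩ := hπ i
  have hi' : z i' = true := (hzπ hi'π).trans hi
  have hi'j : i' ≠ j := by
    rintro rfl
    simp [hi'] at hj
  simpa [Equiv.swap_apply_of_ne_of_ne hi'i hi'j, hi', hj] using hswap hi'π

variable [DecidableEq α]

lemma card_filter_add_card_filter_image_le {Q : Finset ι} {x : α → Bool} {c : Bool}
    (hQ : ∀ i, x (π i) = c → i ∈ Q) :
    #{i | x (π i) = c} + #{a ∈ Q.image π | x a = !c} ≤ #Q := by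
  rw [← card_filter_add_card_filter_not (s := Q) fun i ↦ x (π i) = c]
  gcongr ?_ + ?_
  · exact card_le_card fun i hi ↦ by simp_all
  · rw [filter_image]
    refine card_image_le.trans (card_le_card fun i hi ↦ ?_)
    simp_all

lemma le_of_queryComputable_fiberEq [Fintype α] {m k d : ℕ} (hm : 2 ≤ m)
    (hα : Fintype.card α = 2 * k) (hπ : ∀ a, #{i | π i = a} = m)
    (h : QueryComputable (cubeSlice ι (m * k)) (fiberEq π) d) :
    (m + 1) * k - 1 ≤ d := by
  classical
  obtain ⟨T, hT, hcost⟩ := h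
  obtain ⟨x, hx, -, hbal⟩ := (T.map π).exists_balancedOn_queried hα (D := ∅)
    (y := fun _ ↦ false) (fun c ↦ by simp)
  rw [empty_union, DTree.queried_map] at hbal
  have hz : x ∘ π ∈ cubeSlice ι (m * k) := comp_mem_cubeSlice hπ hx
  have hpartner (i : ι) : ∃ j ≠ i, π j = π i := by
    obtain ⟨j, hj, hji⟩ := exists_mem_ne (s := {j | π j = π i}) (by rw [hπ]; lia) i
    exact ⟨j, hji, by simpa using hj⟩
  obtain ⟨c, hc⟩ := exists_forall_mem_queried_of_computes hpartner hT hz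
    ((factorsThrough_iff _).2 ⟨x, rfl⟩)
  set Q := T.queried (x ∘ π)
  have htouched : ({a | x a = c} : Finset α) ⊆ {a ∈ Q.image π | x a = c} := fun a ha ↦ by
    obtain ⟨i, hi⟩ := card_pos.1 (show 0 < #{i | π i = a} by rw [hπ]; lia)
    grind
  have hk : k ≤ #{a ∈ Q.image π | x a = c} :=
    (card_filter_eq_of_mem_cubeSlice hα hx c).symm.le.trans (card_le_card htouched)
  have hι : Fintype.card ι = 2 * (m * k) := by rw [card_eq_mul_card hπ, hα]; ring
  have hcolor : #{i | x (π i) = c} = m * k := card_filter_eq_of_mem_cubeSlice hι hz c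
  have hQ := card_filter_add_card_filter_image_le (π := π) (x := x) hc
  have := hbal c
  have := (T.card_queried_le_cost _).trans (hcost _ hz)
  rw [add_one_mul]
  lia

end LowerBound

section UpperBound

variable [Fintype ι] [DecidableEq α] {π : ι → α} {m k : ℕ} {z : ι → Bool}

lemma factorsThrough_of_forall_mem {A : Finset α} {c : Bool}
    (hcard : #{i | z i = c} ≤ #{i | π i ∈ A}) (hA : ∀ i, π i ∈ A → z i = c) :
    z.FactorsThrough π := by
  have heq : ({i | π i ∈ A} : Finset ι) = ({i | z i = c} : Finset ι) :=
    eq_of_subset_of_card_le (fun i hi ↦ by simp_all) hcard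
  have hiff (i : ι) : z i = c ↔ π i ∈ A := by simpa using (Finset.ext_iff.1 heq i).symm
  intro i j hij
  have hij' : z i = c ↔ z j = c := by rw [hiff, hiff, hij]
  cases c <;> grind

lemma exists_card_erase_filter_eq [Fintype α] (hm : 0 < m) (hα : Fintype.card α = 2 * k)
    (hπ : ∀ a, #{i | π i = a} = m) {r : α → ι} (hr : LeftInverse π r)
    (hz : z ∈ cubeSlice ι (m * k)) (hzπ : z.FactorsThrough π) (a₀ : α) :
    ∃ c, #{a ∈ univ.erase a₀ | z (r a) = c} = k := by
  refine ⟨!z (r a₀), ?_⟩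
  set c := !z (r a₀)
  have hskip : {a ∈ univ.erase a₀ | z (r a) = c} = ({a | z (r a) = c} : Finset α) := by
    grind
  have hι : Fintype.card ι = 2 * (m * k) := by rw [card_eq_mul_card hπ, hα]; ring
  have hfibers := card_filter_apply_mem hπ {a | z (r a) = c}
  have hzr (i : ι) : z (r (π i)) = z i := hzπ (hr (π i))
  simp only [mem_filter_univ, hzr] at hfibers
  rw [card_filter_eq_of_mem_cubeSlice hι hz c] at hfibers
  rw [hskip, Nat.eq_of_mul_eq_mul_left hm hfibers]

lemma queryComputable_fiberEq_of_colorClass [Fintype α] (hα : Fintype.card α = 2 * k)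
    (hπ : ∀ a, #{i | π i = a} = m) {r : α → ι} (hr : LeftInverse π r) {A : Finset α}
    (hA : #A = k) (c : Bool) :
    QueryComputable {z ∈ cubeSlice ι (m * k) | ∀ a ∈ A, z (r a) = c} (fiberEq π)
      (m * k - k) := by
  classical
  let Q := ({i | π i ∈ A} : Finset ι) \ A.image r
  have hQ (i : ι) : i ∈ Q ↔ π i ∈ A ∧ i ∉ A.image r := by simp [Q]
  have hrA : A.image r ⊆ ({i | π i ∈ A} : Finset ι) := by grind
  have hcardQ : #Q = m * k - k := by
    rw [card_sdiff_of_subset hrA, card_filter_apply_mem hπ, card_image_of_injective _ hr.injective,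
      hA]
  have hι : Fintype.card ι = 2 * (m * k) := by rw [card_eq_mul_card hπ, hα]; ring
  rw [← hcardQ, ← zero_add #_]
  refine .of_queries Q fun y ↦ .of_forall_eq (b := decide (∀ i ∈ Q, y i = c)) ?_
  rintro z ⟨⟨hz, hzA⟩, hzy⟩
  rw [Bool.eq_iff_iff, fiberEq_eq_true_iff, decide_eq_true_iff]
  constructor
  · intro hzπ i hi
    rw [← hzy i hi, ← hzA (π i) ((hQ i).1 hi).1]
    exact hzπ (hr (π i)).symm
  · intro hy
    refine factorsThrough_of_forall_mem (A := A) (c := c) ?_ fun i hi ↦ ?_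
    · rw [card_filter_eq_of_mem_cubeSlice hι hz, card_filter_apply_mem hπ, hA]
    · by_cases hir : i ∈ A.image r
      · obtain ⟨a, ha, rfl⟩ := mem_image.1 hir
        exact hzA a ha
      · have hiQ : i ∈ Q := (hQ i).2 ⟨hi, hir⟩
        rw [hzy i hiQ, hy i hiQ]

lemma queryComputable_fiberEq [Fintype α] (hm : 0 < m) (hk : 1 ≤ k)
    (hα : Fintype.card α = 2 * k) (hπ : ∀ a, #{i | π i = a} = m) :
    QueryComputable (cubeSlice ι (m * k)) (fiberEq π) ((m + 1) * k - 1) := by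
  classical
  obtain ⟨r, hr⟩ : HasRightInverse π := Surjective.hasRightInverse fun a ↦ by
    obtain ⟨i, hi⟩ := card_pos.1 (hm.trans_eq (hπ a).symm)
    exact ⟨i, by simpa using hi⟩
  obtain ⟨a₀⟩ : Nonempty α := Fintype.card_pos_iff.1 (by lia)
  have hcost : m * k - k + #((univ.erase a₀).image r) = (m + 1) * k - 1 := by
    rw [card_image_of_injective _ hr.injective, card_erase_of_mem (mem_univ a₀), card_univ, hα]
    have := Nat.le_mul_of_pos_left k hm
    lia
  rw [← hcost]
  refine .of_queries _ fun y ↦ ?_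
  simp only [forall_mem_image]
  by_cases hy : ∃ c, #{a ∈ univ.erase a₀ | y (r a) = c} = k
  · obtain ⟨c, hc⟩ := hy
    refine (queryComputable_fiberEq_of_colorClass hα hπ hr hc c).mono ?_
    rintro z ⟨hz, hzy⟩
    exact ⟨hz, fun a ha ↦ by grind⟩
  · refine .of_forall_eq (b := false) fun z hz ↦ ?_
    rw [Bool.eq_false_iff, Ne, fiberEq_eq_true_iff]
    intro hzπ
    obtain ⟨c, hc⟩ := exists_card_erase_filter_eq hm hα hπ hr hz.1 hzπ a₀
    refine hy ⟨c, ?_⟩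
    rwa [filter_congr fun a ha ↦ by rw [hz.2 ha]] at hc

end UpperBound

theorem stmt5_general [Fintype ι] [Fintype α] [DecidableEq α] {π : ι → α} {m k : ℕ} (hm : 2 ≤ m)
    (hk : 1 ≤ k) (hα : Fintype.card α = 2 * k) (hπ : ∀ a, #{i | π i = a} = m) :
    Dquery (cubeSlice ι (m * k)) (fiberEq π) = (m + 1) * k - 1 :=
  IsLeast.csInf_eq ⟨queryComputable_fiberEq (by lia) hk hα hπ, fun _ ↦
    le_of_queryComputable_fiberEq hm hα hπ⟩

/-- The index in its block of length `2 * k` of a coordinate of `(x, y)`; its fibers are the pairs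
of coordinates compared by `EQfun k`. -/
def blockIndex (k : ℕ) (i : Fin (4 * k)) : Fin (2 * k) :=
  ⟨i % (2 * k), Nat.mod_lt _ (by have := i.2; lia)⟩

lemma blockIndex_eq_iff {k : ℕ} {i : Fin (4 * k)} {j : Fin (2 * k)} :
    blockIndex k i = j ↔ i = ⟨j, by lia⟩ ∨ i = ⟨2 * k + j, by lia⟩ := by
  simp only [blockIndex, Fin.ext_iff]
  rcases lt_or_ge i.1 (2 * k) with hi | hi
  · rw [Nat.mod_eq_of_lt hi]
    lia
  · rw [Nat.mod_eq_sub_mod hi, Nat.mod_eq_of_lt (by lia)]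
    lia

lemma card_filter_blockIndex_eq {k : ℕ} (j : Fin (2 * k)) : #{i | blockIndex k i = j} = 2 := by
  have hpair : ({i | blockIndex k i = j} : Finset (Fin (4 * k))) =
      {⟨j, by lia⟩, ⟨2 * k + j, by lia⟩} := by
    ext i
    simp [blockIndex_eq_iff]
  rw [hpair, card_pair]
  simp only [ne_eq, Fin.mk.injEq]
  lia

lemma EQfun_eq_fiberEq_blockIndex (k : ℕ) : EQfun k = fiberEq (blockIndex k) := by
  funext z
  rw [Bool.eq_iff_iff, fiberEq_eq_true_iff, EQfun, decide_eq_true_iff]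
  constructor
  · intro h i j hij
    rcases blockIndex_eq_iff.1 hij with hi | hi <;>
      rcases blockIndex_eq_iff.1 (Eq.refl (blockIndex k j)) with hj | hj <;>
      grind
  · intro h j
    exact h ((blockIndex_eq_iff.2 (.inl rfl)).trans (blockIndex_eq_iff.2 (.inr rfl)).symm)

/-- The deterministic query complexity of Equality on the balanced slice of `{0,1}^{4k}`
is exactly `3k - 1`. -/
theorem stmt5 (k : ℕ) (hk : 1 ≤ k) :
    Dquery (cubeSlice (Fin (4 * k)) (2 * k)) (EQfun k) = 3 * k - 1 := by
  rw [EQfun_eq_fiberEq_blockIndex]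
  exact stmt5_general le_rfl hk (Fintype.card_fin _) card_filter_blockIndex_eq
end

section
/- Let n be even, k = n/2, and let h be a nonnegative integer satisfying 2e · C(2h,h) · C(k,h)² ≤ 2^{C(2h,h)}, where C(a,b) denotes the binomial coefficient. Then there exists a Boolean function f on the balanced slice of {0,1}^n that has no balanced certificate of size n − 2h; consequently there exists a function f on the balanced slice with mBC(f) ≥ n − O(log log n). -/
/-- The size of a partial assignment: the number of fixed coordinates. -/
def certSize {ι : Type} [Fintype ι] (C : ι → Option Bool) : ℕ :=
  (Finset.univ.filter fun i => (C i).isSome).card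

/-- `x` is consistent with the partial assignment `C`. -/
def ConsistentWith {ι : Type} (C : ι → Option Bool) (x : ι → Bool) : Prop :=
  ∀ i : ι, ∀ b : Bool, C i = some b → x i = b

/-- A partial assignment is balanced if it fixes as many coordinates to `0` as to `1`. -/
def BalancedCert {ι : Type} [Fintype ι] (C : ι → Option Bool) : Prop :=
  (Finset.univ.filter fun i => C i = some false).card =
    (Finset.univ.filter fun i => C i = some true).card

/-- `C` is a `b`-certificate of `f` on the domain `S`. -/
def IsCertificate {ι : Type} (S : Set (ι → Bool)) (f : (ι → Bool) → Bool)
    (C : ι → Option Bool) (b : Bool) : Prop :=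
  ∀ x ∈ S, ConsistentWith C x → f x = b

/-- Balanced certificate complexity of `f` at `x`: the smallest size of a balanced
`f x`-certificate consistent with `x`. -/
noncomputable def BC {ι : Type} [Fintype ι] (S : Set (ι → Bool))
    (f : (ι → Bool) → Bool) (x : ι → Bool) : ℕ :=
  sInf {s | ∃ C : ι → Option Bool, BalancedCert C ∧ ConsistentWith C x ∧
    IsCertificate S f C (f x) ∧ certSize C = s}

/-- Minimum balanced certificate complexity of `f`. -/
noncomputable def mBC {ι : Type} [Fintype ι] (S : Set (ι → Bool))
    (f : (ι → Bool) → Bool) : ℕ :=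
  sInf {m | ∃ x ∈ S, BC S f x = m}

/-!
Colour the balanced slice with two colours uniformly at random. A balanced partial assignment `C` of
size `n - 2h` certifies a value of the colouring exactly when the set of slice points consistent
with `C`, which has `(2h).choose h` elements, is monochromatic. A slice point is consistent with
`(k.choose h) ^ 2` such assignments, where `k = n / 2`, so each of these sets meets fewer than
`(2h).choose h * (k.choose h) ^ 2` others, and the Lovász local lemma yields a colouring under which
none is monochromatic. Since a smaller balanced certificate extends, along an input consistent with
it, to one of size `n - 2h`, every balanced certificate of a slice point has size at least `n - 2h`.
-/

open MeasureTheory Finset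

section LocalLemma

variable {Ω ι : Type*} [MeasurableSpace Ω] {μ : Measure Ω}

lemma one_sub_mul_measureReal_le_inter_compl {s t : Set Ω} {c : ℝ}
    (h : μ.real (s ∩ t) ≤ c * μ.real t) : (1 - c) * μ.real t ≤ μ.real (sᶜ ∩ t) := by
  have hcover : μ.real t ≤ μ.real (s ∩ t) + μ.real (sᶜ ∩ t) := by
    calc μ.real t = μ.real (s ∩ t ∪ sᶜ ∩ t) := by rw [← Set.union_inter_distrib_right]; simp
      _ ≤ _ := measureReal_union_le _ _
  linarith

variable {A : ι → Set Ω} {N : ι → Finset ι} {x : ι → ℝ}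

lemma prod_one_sub_mul_measureReal_le [DecidableEq ι] (hx1 : ∀ i, x i ≤ 1) (S T : Finset ι)
    (h : ∀ i ∈ T, ∀ R ⊆ T, i ∉ R →
      μ.real (A i ∩ ⋂ j ∈ R ∪ S, (A j)ᶜ) ≤ x i * μ.real (⋂ j ∈ R ∪ S, (A j)ᶜ)) :
    (∏ i ∈ T, (1 - x i)) * μ.real (⋂ j ∈ S, (A j)ᶜ) ≤ μ.real (⋂ j ∈ T ∪ S, (A j)ᶜ) := by
  induction T using Finset.induction_on with
  | empty => simp
  | insert a T ha ih =>
    have ih' := ih fun i hi R hR ↦ h i (mem_insert_of_mem hi) R (hR.trans (subset_insert a T))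
    calc (∏ i ∈ insert a T, (1 - x i)) * μ.real (⋂ j ∈ S, (A j)ᶜ)
        = (1 - x a) * ((∏ i ∈ T, (1 - x i)) * μ.real (⋂ j ∈ S, (A j)ᶜ)) := by
          rw [prod_insert ha, mul_assoc]
      _ ≤ (1 - x a) * μ.real (⋂ j ∈ T ∪ S, (A j)ᶜ) :=
          mul_le_mul_of_nonneg_left ih' (sub_nonneg.2 (hx1 a))
      _ ≤ μ.real ((A a)ᶜ ∩ ⋂ j ∈ T ∪ S, (A j)ᶜ) :=
          one_sub_mul_measureReal_le_inter_compl <|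
            h a (mem_insert_self a T) T (subset_insert a T) ha
      _ = μ.real (⋂ j ∈ insert a T ∪ S, (A j)ᶜ) := by rw [insert_union, set_biInter_insert]

variable [IsFiniteMeasure μ]

lemma measureReal_inter_biInter_compl_le (hx0 : ∀ i, 0 ≤ x i) (hx1 : ∀ i, x i ≤ 1)
    (hA : ∀ i, ∀ S : Finset ι, i ∉ S → Disjoint S (N i) →
      μ.real (A i ∩ ⋂ j ∈ S, (A j)ᶜ) ≤
        x i * (∏ j ∈ N i, (1 - x j)) * μ.real (⋂ j ∈ S, (A j)ᶜ))
    (i : ι) (S : Finset ι) (hi : i ∉ S) :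
    μ.real (A i ∩ ⋂ j ∈ S, (A j)ᶜ) ≤ x i * μ.real (⋂ j ∈ S, (A j)ᶜ) := by
  classical
  induction S using Finset.strongInduction generalizing i with
  | H S ih =>
    have hsplit : S ∩ N i ∪ S \ N i = S := by rw [union_comm, sdiff_union_inter]
    have hnear : (∏ j ∈ S ∩ N i, (1 - x j)) * μ.real (⋂ j ∈ S \ N i, (A j)ᶜ) ≤
        μ.real (⋂ j ∈ S, (A j)ᶜ) := by
      refine (prod_one_sub_mul_measureReal_le hx1 (S \ N i) (S ∩ N i)
        fun j hj R hR hjR ↦ ?_).trans_eq (by rw [hsplit])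
      have hj' : j ∉ R ∪ S \ N i := by grind
      exact ih _ (by grind) j hj'
    have hprod : ∏ j ∈ N i, (1 - x j) ≤ ∏ j ∈ S ∩ N i, (1 - x j) :=
      prod_le_prod_of_subset_of_le_one inter_subset_right
        (fun j _ ↦ sub_nonneg.2 (hx1 j)) (fun j _ _ ↦ sub_le_self 1 (hx0 j))
    calc μ.real (A i ∩ ⋂ j ∈ S, (A j)ᶜ)
        ≤ μ.real (A i ∩ ⋂ j ∈ S \ N i, (A j)ᶜ) :=
          measureReal_mono (Set.inter_subset_inter_right _
            (Set.biInter_subset_biInter_left fun j hj ↦ (mem_sdiff.1 hj).1))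
      _ ≤ x i * (∏ j ∈ N i, (1 - x j)) * μ.real (⋂ j ∈ S \ N i, (A j)ᶜ) :=
          hA i _ (fun h ↦ hi (mem_sdiff.1 h).1) sdiff_disjoint
      _ ≤ x i * (∏ j ∈ S ∩ N i, (1 - x j)) * μ.real (⋂ j ∈ S \ N i, (A j)ᶜ) := by
          gcongr
          exact hx0 i
      _ ≤ x i * μ.real (⋂ j ∈ S, (A j)ᶜ) := by
          rw [mul_assoc]
          exact mul_le_mul_of_nonneg_left hnear (hx0 i)

/- Conditioning only on the complements of the non-neighbours of `i` replaces independence (the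
"lopsided" form); for colourings it reduces the hypothesis to a recolouring count. -/
theorem lovasz_local_lemma [NeZero μ] (hx0 : ∀ i, 0 ≤ x i) (hx1 : ∀ i, x i < 1)
    (hA : ∀ i, ∀ S : Finset ι, i ∉ S → Disjoint S (N i) →
      μ.real (A i ∩ ⋂ j ∈ S, (A j)ᶜ) ≤
        x i * (∏ j ∈ N i, (1 - x j)) * μ.real (⋂ j ∈ S, (A j)ᶜ)) (S : Finset ι) :
    0 < μ.real (⋂ j ∈ S, (A j)ᶜ) := by
  classical
  have hx1' i := (hx1 i).le
  have hbound := prod_one_sub_mul_measureReal_le (μ := μ) (A := A) hx1' ∅ S fun i _ R _ hiR ↦ by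
    simpa using measureReal_inter_biInter_compl_le hx0 hx1' hA i R hiR
  have huniv : 0 < μ.real Set.univ := measureReal_univ_pos
  have hprod : 0 < ∏ i ∈ S, (1 - x i) := prod_pos fun i _ ↦ sub_pos.2 (hx1 i)
  calc 0 < (∏ i ∈ S, (1 - x i)) * μ.real Set.univ := mul_pos hprod huniv
    _ ≤ _ := by simpa using hbound

lemma exists_one_le_exp_one_mul_mul_one_sub_pow (d : ℕ) :
    ∃ x : ℝ, 0 ≤ x ∧ x < 1 ∧ 1 ≤ Real.exp 1 * (d + 1) * (x * (1 - x) ^ d) := by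
  rcases Nat.eq_zero_or_pos d with rfl | hd
  · exact ⟨Real.exp (-1), by positivity, by simp, by simp [← Real.exp_add]⟩
  · have hd' : (0 : ℝ) < d := by exact_mod_cast hd
    refine ⟨1 / (d + 1), by positivity, by rw [div_lt_one] <;> linarith, ?_⟩
    have hinv : 1 - 1 / ((d : ℝ) + 1) = (1 + (d : ℝ)⁻¹)⁻¹ := by field_simp; ring
    calc (1 : ℝ) ≤ Real.exp 1 * ((1 + (d : ℝ)⁻¹) ^ d)⁻¹ := by
          rw [← div_eq_mul_inv, one_le_div (by positivity)]
          exact Real.one_add_inv_pow_le_exp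
      _ = _ := by rw [hinv, inv_pow]; field_simp

theorem lovasz_local_lemma_symmetric [NeZero μ] {p : ℝ} {d : ℕ}
    (hA : ∀ i, ∀ S : Finset ι, i ∉ S → Disjoint S (N i) →
      μ.real (A i ∩ ⋂ j ∈ S, (A j)ᶜ) ≤ p * μ.real (⋂ j ∈ S, (A j)ᶜ))
    (hN : ∀ i, #(N i) ≤ d) (hp : Real.exp 1 * p * (d + 1) ≤ 1) (S : Finset ι) :
    0 < μ.real (⋂ j ∈ S, (A j)ᶜ) := by
  obtain ⟨x, hx0, hx1, hx⟩ := exists_one_le_exp_one_mul_mul_one_sub_pow d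
  have hpx : p ≤ x * (1 - x) ^ d := by
    refine le_of_mul_le_mul_left ?_ (by positivity : (0 : ℝ) < Real.exp 1 * (d + 1))
    linarith
  refine lovasz_local_lemma (fun _ ↦ hx0) (fun _ ↦ hx1) (fun i S hi hS ↦ (hA i S hi hS).trans ?_) S
  gcongr
  rw [prod_const]
  calc p ≤ x * (1 - x) ^ d := hpx
    _ ≤ x * (1 - x) ^ #(N i) := by
      gcongr ?_ * ?_
      exact pow_le_pow_of_le_one (by linarith) (by linarith) (hN i)

end LocalLemma

lemma measureReal_count {α : Type*} [MeasurableSpace α] [DiscreteMeasurableSpace α] (s : Set α) :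
    Measure.count.real s = s.ncard := by
  simp only [measureReal_def, Measure.count_apply .of_discrete, Set.ncard]
  induction s.encard using ENat.recTopCoe <;> simp

section Coloring

variable {V κ ι : Type*}

/-- The colouring `f` uses a single colour on the edge `E` of a hypergraph with vertex set `V`. -/
def IsMonochromatic (f : V → κ) (E : Finset V) : Prop :=
  ∃ c, ∀ v ∈ E, f v = c

lemma dependsOn_isMonochromatic (E : Finset V) :
    DependsOn (fun f : V → κ ↦ IsMonochromatic f E) E := fun f g hfg ↦
  propext <| exists_congr fun _ ↦ forall₂_congr fun v hv ↦ by rw [hfg v hv]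

lemma dependsOn_mem_biInter_compl_isMonochromatic {E : ι → Finset V} {S : Finset ι} {F : Finset V}
    (hF : ∀ i ∈ S, Disjoint (E i) F) :
    DependsOn (· ∈ ⋂ i ∈ S, {f : V → κ | IsMonochromatic f (E i)}ᶜ) (F : Set V)ᶜ := by
  intro f g hfg
  have hmono : ∀ i ∈ S, IsMonochromatic f (E i) = IsMonochromatic g (E i) := fun i hi ↦
    dependsOn_isMonochromatic (E i) fun v hv ↦ hfg v (disjoint_left.1 (hF i hi) hv)
  simp +contextual [hmono]

lemma card_pow_mul_ncard_eqOn_le [Finite V] [Fintype κ] {G : Set (V → κ)} {E : Finset V}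
    (hG : DependsOn (· ∈ G) (E : Set V)ᶜ) (g : V → κ) :
    Fintype.card κ ^ #E * ({f | Set.EqOn f g E} ∩ G).ncard ≤ G.ncard := by
  classical
  -- `G` ignores the colours on `E`, so each of its members can be recoloured freely there.
  let recolor (p : (E → κ) × (V → κ)) : V → κ := fun v ↦ if hv : v ∈ E then p.1 ⟨v, hv⟩ else p.2 v
  have hmaps : ∀ p ∈ Set.univ ×ˢ ({f | Set.EqOn f g E} ∩ G), recolor p ∈ G := by
    rintro ⟨q, f⟩ ⟨-, -, hfG⟩
    have hagree : ∀ v ∈ (E : Set V)ᶜ, recolor (q, f) v = f v := fun v hv ↦ dif_neg hv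
    exact (hG hagree).mpr hfG
  have hinj : Set.InjOn recolor (Set.univ ×ˢ ({f | Set.EqOn f g E} ∩ G)) := by
    rintro ⟨q, f⟩ ⟨-, hf, -⟩ ⟨q', f'⟩ ⟨-, hf', -⟩ heq
    refine Prod.ext (funext fun v ↦ ?_) (funext fun v ↦ ?_)
    · simpa [recolor] using congrFun heq v
    · by_cases hv : v ∈ E
      · exact (hf hv).trans (hf' hv).symm
      · simpa [recolor, hv] using congrFun heq v
  simpa [Set.ncard_prod] using Set.ncard_le_ncard_of_injOn recolor hmaps hinj

lemma card_pow_mul_ncard_isMonochromatic_le [Finite V] [Fintype κ] {G : Set (V → κ)}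
    {E : Finset V} (hG : DependsOn (· ∈ G) (E : Set V)ᶜ) :
    Fintype.card κ ^ #E * ({f | IsMonochromatic f E} ∩ G).ncard ≤ Fintype.card κ * G.ncard := by
  have hunion : {f | IsMonochromatic f E} ∩ G =
      ⋃ c : κ, {f | Set.EqOn f (fun _ ↦ c) E} ∩ G := by
    ext f
    simp [IsMonochromatic, Set.EqOn]
  calc Fintype.card κ ^ #E * ({f | IsMonochromatic f E} ∩ G).ncard
      ≤ Fintype.card κ ^ #E * ∑ c : κ, ({f | Set.EqOn f (fun _ ↦ c) E} ∩ G).ncard := by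
        rw [hunion]
        gcongr
        exact Set.ncard_iUnion_le_of_fintype _
    _ ≤ ∑ _c : κ, G.ncard := by
        rw [mul_sum]
        exact sum_le_sum fun c _ ↦ card_pow_mul_ncard_eqOn_le hG _
    _ = Fintype.card κ * G.ncard := by simp

variable [Finite V] [Fintype κ] [Nonempty κ] [Fintype ι] [DecidableEq V] {E : ι → Finset V} {r : ℕ}

theorem exists_forall_not_isMonochromatic [DecidableEq ι] {d : ℕ} (hr : ∀ i, r ≤ #(E i))
    (hd : ∀ i, #{j | j ≠ i ∧ ¬ Disjoint (E j) (E i)} ≤ d)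
    (hrd : Real.exp 1 * Fintype.card κ * (d + 1) ≤ (Fintype.card κ : ℝ) ^ r) :
    ∃ f : V → κ, ∀ i, ¬ IsMonochromatic f (E i) := by
  have := Fintype.ofFinite V
  let _ : MeasurableSpace (V → κ) := ⊤
  have hpos : 0 < Measure.count.real
      (⋂ i ∈ Finset.univ, {f : V → κ | IsMonochromatic f (E i)}ᶜ) := by
    refine lovasz_local_lemma_symmetric (p := Fintype.card κ / Fintype.card κ ^ r) (d := d)
      (N := fun i ↦ {j | j ≠ i ∧ ¬ Disjoint (E j) (E i)}) (fun i S hi hS ↦ ?_) hd ?_ Finset.univ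
    · have hfar : ∀ j ∈ S, Disjoint (E j) (E i) := fun j hj ↦ by
        by_contra hmeet
        exact disjoint_left.1 hS hj (by simpa [hmeet] using ne_of_mem_of_not_mem hj hi)
      have hle := (Nat.mul_le_mul_right _ (Nat.pow_le_pow_right Fintype.card_pos (hr i))).trans
        (card_pow_mul_ncard_isMonochromatic_le (κ := κ)
          (dependsOn_mem_biInter_compl_isMonochromatic hfar))
      rw [div_mul_eq_mul_div, le_div_iff₀' (by positivity), measureReal_count, measureReal_count]
      exact_mod_cast hle
    · calc _ = Real.exp 1 * Fintype.card κ * (d + 1) / (Fintype.card κ : ℝ) ^ r := by ring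
        _ ≤ 1 := (div_le_one (by positivity)).2 hrd
  obtain ⟨f, hf⟩ := nonempty_of_measureReal_ne_zero hpos.ne'
  exact ⟨f, by simpa using hf⟩

theorem exists_forall_not_isMonochromatic_of_degree_le {D : ℕ} (hr0 : 0 < r)
    (hr : ∀ i, #(E i) = r) (hD : ∀ v, #{i | v ∈ E i} ≤ D)
    (hrD : Real.exp 1 * Fintype.card κ * (r * D) ≤ (Fintype.card κ : ℝ) ^ r) :
    ∃ f : V → κ, ∀ i, ¬ IsMonochromatic f (E i) := by
  classical
  rcases isEmpty_or_nonempty ι with hι | ⟨⟨i₀⟩⟩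
  · exact ⟨fun _ ↦ Classical.arbitrary κ, isEmptyElim⟩
  have hneighbors (i : ι) : #{j | j ≠ i ∧ ¬ Disjoint (E j) (E i)} + 1 ≤ r * D := by
    have hsub : insert i ({j | j ≠ i ∧ ¬ Disjoint (E j) (E i)} : Finset ι) ⊆
        (E i).biUnion fun v ↦ {j | v ∈ E j} := by
      intro j hj
      simp only [mem_insert, mem_filter_univ, mem_biUnion] at hj ⊢
      rcases hj with rfl | ⟨-, hj⟩
      · exact (card_pos.1 (hr0.trans_eq (hr j).symm)).imp fun v hv ↦ ⟨hv, hv⟩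
      · obtain ⟨v, hvj, hvi⟩ := not_disjoint_iff.1 hj
        exact ⟨v, hvi, hvj⟩
    calc _ = #(insert i ({j | j ≠ i ∧ ¬ Disjoint (E j) (E i)} : Finset ι)) := by simp
      _ ≤ #((E i).biUnion fun v ↦ {j | v ∈ E j}) := card_le_card hsub
      _ ≤ r * D := by
        rw [← hr i]
        exact card_biUnion_le_card_mul _ _ _ fun v _ ↦ hD v
  refine exists_forall_not_isMonochromatic (d := r * D - 1) (fun i ↦ (hr i).ge)
    (fun i ↦ by have := hneighbors i; omega) ?_
  have := hneighbors i₀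
  rw [← Nat.cast_add_one, Nat.sub_add_cancel (by omega)]
  exact_mod_cast hrD

end Coloring

section Certificates

variable {ι : Type} [Fintype ι] {C : ι → Option Bool} {x : ι → Bool} {k m : ℕ}

lemma sum_card_filter_eq_some (C : ι → Option Bool) :
    ∑ b, #{i | C i = some b} = certSize C := by
  classical
  rw [certSize, ← card_biUnion fun b _ b' _ hbb' ↦ disjoint_filter.2 fun i _ hb hb' ↦
    hbb' (Option.some_injective _ (hb.symm.trans hb'))]
  congr 1
  ext i
  simp [Option.isSome_iff_exists, or_comm]

lemma card_filter_eq_none_add_certSize (C : ι → Option Bool) :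
    #{i | C i = none} + certSize C = Fintype.card ι := by
  simpa [certSize, Option.isSome_iff_ne_none] using
    card_filter_add_card_filter_not (s := univ) fun i ↦ C i = none

lemma BalancedCert.card_filter_eq_some (hC : BalancedCert C) (hm : certSize C = 2 * m) (b : Bool) :
    #{i | C i = some b} = m := by
  have hsum := sum_card_filter_eq_some C
  rw [Fintype.sum_bool] at hsum
  rw [BalancedCert] at hC
  cases b <;> omega

lemma card_filter_eq_of_mem_cubeSlice_s7 (hι : Fintype.card ι = 2 * k) (hx : x ∈ cubeSlice ι k)
    (b : Bool) : #{i | x i = b} = k := by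
  have htrue : #{i | x i = true} = k := hx
  have hsum := card_filter_add_card_filter_not (s := univ) fun i ↦ x i = true
  simp only [Bool.not_eq_true, card_univ] at hsum
  cases b <;> omega

lemma ConsistentWith.filter_eq_some_subset (hx : ConsistentWith C x) (b : Bool) :
    ({i | C i = some b} : Finset ι) ⊆ ({i | x i = b} : Finset ι) :=
  monotone_filter_right _ fun i _ ↦ hx i b

lemma ConsistentWith.card_filter_eq (hx : ConsistentWith C x) (b : Bool) :
    #{i | x i = b} = #{i | C i = some b} + #{i | C i = none ∧ x i = b} := by
  classical
  rw [← card_union_of_disjoint (disjoint_filter.2 fun i _ ↦ by simp +contextual)]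
  congr 1
  ext i
  have hxi := hx i
  cases hi : C i with
  | none => simp [hi]
  | some c => simp [hi, hxi c hi]

instance [DecidableEq ι] (C : ι → Option Bool) : DecidablePred (ConsistentWith C) :=
  fun _ ↦ inferInstanceAs (Decidable (∀ _ _, _ → _))

/-- The inputs of Hamming weight `k` consistent with `C`. -/
def sliceSubcube [DecidableEq ι] (C : ι → Option Bool) (k : ℕ) : Finset (ι → Bool) :=
  {x | hamWeight x = k ∧ ConsistentWith C x}

lemma card_sliceSubcube [DecidableEq ι] (C : ι → Option Bool) (m : ℕ) :
    #(sliceSubcube C (#{i | C i = some true} + m)) = (#{i | C i = none}).choose m := by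
  -- A consistent input is determined by its set of ones among the free coordinates of `C`.
  let free (x : ι → Bool) : Finset ι := {i | C i = none ∧ x i = true}
  let fill (T : Finset ι) (i : ι) : Bool := (C i).getD (decide (i ∈ T))
  have hfill (T : Finset ι) : ConsistentWith C (fill T) := fun i b hb ↦ by simp [fill, hb]
  have hfree : ∀ T ∈ powersetCard m {i | C i = none}, free (fill T) = T := fun T hT ↦ by
    have hTnone : ∀ i ∈ T, C i = none := fun i hi ↦ by simpa using (mem_powersetCard.1 hT).1 hi
    ext i
    by_cases hi : C i = none
    · simp [free, fill, hi]
    · simp [free, hi, mt (hTnone i) hi]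
  have hweight {x : ι → Bool} (hx : ConsistentWith C x) :
      hamWeight x = #{i | C i = some true} + #(free x) := hx.card_filter_eq true
  rw [← card_powersetCard]
  refine card_nbij' free fill (fun x hx ↦ ?_) (fun T hT ↦ ?_) (fun x hx ↦ ?_) hfree
  · obtain ⟨hxm, hx⟩ := mem_filter_univ _ |>.1 hx
    refine mem_powersetCard.2 ⟨monotone_filter_right _ fun i _ ↦ And.left, ?_⟩
    exact Nat.add_left_cancel ((hweight hx).symm.trans hxm)
  · refine (mem_filter_univ _).2 ⟨?_, hfill T⟩
    rw [hweight (hfill T), hfree T hT, (mem_powersetCard.1 hT).2]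
  · have hx : ConsistentWith C x := ((mem_filter_univ _).1 hx).2
    funext i
    cases hi : C i with
    | none => simp [fill, free, hi]
    | some b => simp [fill, hi, hx i b hi]

lemma card_consistentWith_le [DecidableEq ι] (x : ι → Bool) (m : Bool → ℕ) :
    #{C | (∀ b, #{i | C i = some b} = m b) ∧ ConsistentWith C x} ≤
      ∏ b, (#{i | x i = b}).choose (m b) := by
  simp_rw [← card_powersetCard, ← Fintype.card_piFinset]
  refine card_le_card_of_injOn (fun C b ↦ {i | C i = some b}) (fun C hC ↦ ?_) fun C _ C' _ h ↦ ?_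
  · simp_all [ConsistentWith.filter_eq_some_subset, mem_powersetCard]
  · funext i
    refine Option.ext fun b ↦ ?_
    simpa using Finset.ext_iff.1 (congrFun h b) i

lemma card_mem_sliceSubcube_le [DecidableEq ι] {h : ℕ} (hι : Fintype.card ι = 2 * k) (hhk : h ≤ k)
    (x : ι → Bool) :
    #{C | (∀ b, #{i | C i = some b} = k - h) ∧ x ∈ sliceSubcube C k} ≤ k.choose h ^ 2 := by
  by_cases hx : x ∈ cubeSlice ι k
  · calc _ ≤ #{C | (∀ b, #{i | C i = some b} = k - h) ∧ ConsistentWith C x} :=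
          card_le_card <| monotone_filter_right _ fun C _ hC ↦
            ⟨hC.1, ((mem_filter_univ x).1 hC.2).2⟩
      _ ≤ ∏ b, (#{i | x i = b}).choose (k - h) := card_consistentWith_le x fun _ ↦ k - h
      _ = k.choose h ^ 2 := by
          simp only [card_filter_eq_of_mem_cubeSlice_s7 hι hx, Nat.choose_symm hhk, prod_const,
            card_univ, Fintype.card_bool]
  · have hx' (C : ι → Option Bool) : x ∉ sliceSubcube C k := fun hC ↦
      hx ((mem_filter_univ x).1 hC).1
    simp [hx']

lemma ConsistentWith.exists_extension (hx : ConsistentWith C x) {m : Bool → ℕ}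
    (hm : ∀ b, #{i | C i = some b} ≤ m b) (hm' : ∀ b, m b ≤ #{i | x i = b}) :
    ∃ C' : ι → Option Bool, (∀ b, #{i | C' i = some b} = m b) ∧
      ∀ y, ConsistentWith C' y → ConsistentWith C y := by
  classical
  choose T hCT hTx hT using fun b ↦
    exists_subsuperset_card_eq (hx.filter_eq_some_subset b) (hm b) (hm' b)
  have hfixed (i : ι) (b : Bool) :
      (if i ∈ T (x i) then some (x i) else none) = some b ↔ i ∈ T b := by
    refine ⟨fun h ↦ ?_, fun h ↦ ?_⟩
    · grind
    · have : x i = b := by simpa using hTx b h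
      simp [this, h]
  refine ⟨fun i ↦ if i ∈ T (x i) then some (x i) else none, fun b ↦ ?_, fun y hy i b hib ↦ ?_⟩
  · simp [hfixed, hT]
  · exact hy i b ((hfixed i b).2 (hCT b (by simpa using hib)))

lemma cubeSlice_nonempty (hk : k ≤ Fintype.card ι) : (cubeSlice ι k).Nonempty := by
  classical
  obtain ⟨T, -, hT⟩ := exists_subset_card_eq (s := (univ : Finset ι)) hk
  exact ⟨fun i ↦ decide (i ∈ T), by simpa [cubeSlice, hamWeight] using hT⟩

lemma exists_balancedCert_isCertificate (hx : #{i | x i = false} = #{i | x i = true})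
    (S : Set (ι → Bool)) (f : (ι → Bool) → Bool) :
    ∃ C : ι → Option Bool, BalancedCert C ∧ ConsistentWith C x ∧ IsCertificate S f C (f x) := by
  refine ⟨fun i ↦ some (x i), by simpa [BalancedCert] using hx,
    fun i b hb ↦ Option.some_injective _ hb, fun y _ hy ↦ ?_⟩
  rw [show y = x from funext fun i ↦ hy i (x i) rfl]

lemma two_mul_le_BC {f : (ι → Bool) → Bool} (hι : Fintype.card ι = 2 * k) (hm : m ≤ k)
    (hf : ∀ C b, BalancedCert C → certSize C = 2 * m → ¬ IsCertificate (cubeSlice ι k) f C b)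
    (hx : x ∈ cubeSlice ι k) : 2 * m ≤ BC (cubeSlice ι k) f x := by
  have hcard (b : Bool) : #{i | x i = b} = k := card_filter_eq_of_mem_cubeSlice_s7 hι hx b
  obtain ⟨C₀, hC₀, hC₀x, hC₀f⟩ := exists_balancedCert_isCertificate
    ((hcard false).trans (hcard true).symm) (cubeSlice ι k) f
  refine le_csInf ⟨_, C₀, hC₀, hC₀x, hC₀f, rfl⟩ ?_
  rintro _ ⟨C, hC, hCx, hCf, rfl⟩
  by_contra! hlt
  have hsmall (b : Bool) : #{i | C i = some b} ≤ m := by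
    have hsum := sum_card_filter_eq_some C
    rw [Fintype.sum_bool] at hsum
    rw [BalancedCert] at hC
    cases b <;> omega
  obtain ⟨C', hC', hC'C⟩ := hCx.exists_extension hsmall fun b ↦ hm.trans_eq (hcard b).symm
  have hsize : certSize C' = 2 * m := by
    rw [← sum_card_filter_eq_some, Fintype.sum_bool, hC', hC', two_mul]
  exact hf C' (f x) ((hC' false).trans (hC' true).symm) hsize fun y hy hC'y ↦ hCf y hy (hC'C y hC'y)

lemma le_mBC {S : Set (ι → Bool)} {f : (ι → Bool) → Bool} (hS : S.Nonempty)
    (h : ∀ x ∈ S, m ≤ BC S f x) : m ≤ mBC S f := by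
  obtain ⟨x, hx⟩ := hS
  refine le_csInf ⟨_, x, hx, rfl⟩ ?_
  rintro _ ⟨y, hy, rfl⟩
  exact h y hy

theorem exists_forall_not_isCertificate {h : ℕ} (hι : Fintype.card ι = 2 * k) (hhk : h ≤ k)
    (hyp : 2 * Real.exp 1 * (2 * h).choose h * (k.choose h : ℝ) ^ 2 ≤ 2 ^ (2 * h).choose h) :
    ∃ f : (ι → Bool) → Bool, ∀ C b, BalancedCert C → certSize C = 2 * (k - h) →
      ¬ IsCertificate (cubeSlice ι k) f C b := by
  classical
  let E (C : {C : ι → Option Bool // ∀ b, #{i | C i = some b} = k - h}) := sliceSubcube C.1 k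
  have hE (C) : #(E C) = (2 * h).choose h := by
    have hsum := sum_card_filter_eq_some C.1
    have hnone := card_filter_eq_none_add_certSize C.1
    rw [Fintype.sum_bool, C.2, C.2] at hsum
    have hcard := card_sliceSubcube C.1 h
    rwa [C.2, Nat.sub_add_cancel hhk, show #{i | C.1 i = none} = 2 * h by omega] at hcard
  have hdegree (x : ι → Bool) : #{C | x ∈ E C} ≤ k.choose h ^ 2 := by
    refine (card_le_card_of_injOn Subtype.val (fun C hC ↦ ?_) Subtype.val_injective.injOn).trans
      (card_mem_sliceSubcube_le hι hhk x)
    exact (mem_filter_univ _).2 ⟨C.2, (mem_filter_univ C).1 hC⟩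
  obtain ⟨f, hf⟩ := exists_forall_not_isMonochromatic_of_degree_le (κ := Bool)
    (Nat.choose_pos (by omega)) hE hdegree
    (by rw [Fintype.card_bool]; push_cast; linarith)
  refine ⟨f, fun C b hC hsize hcert ↦ hf ⟨C, hC.card_filter_eq_some hsize⟩ ⟨b, fun x hx ↦ ?_⟩⟩
  obtain ⟨hxk, hxC⟩ := (mem_filter_univ x).1 hx
  exact hcert x hxk hxC

end Certificates

theorem stmt7_general {ι : Type} [Fintype ι] (h : ℕ) (hι : Even (Fintype.card ι))
    (hhι : 2 * h ≤ Fintype.card ι)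
    (hyp : 2 * Real.exp 1 * (Nat.choose (2 * h) h : ℝ) *
      (Nat.choose (Fintype.card ι / 2) h : ℝ) ^ 2 ≤ (2 : ℝ) ^ (Nat.choose (2 * h) h)) :
    ∃ f : (ι → Bool) → Bool,
      (¬ ∃ (C : ι → Option Bool) (b : Bool), BalancedCert C ∧
          certSize C = Fintype.card ι - 2 * h ∧
          IsCertificate (cubeSlice ι (Fintype.card ι / 2)) f C b) ∧
      Fintype.card ι - 2 * h ≤ mBC (cubeSlice ι (Fintype.card ι / 2)) f := by
  obtain ⟨k, hk⟩ := hι.two_dvd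
  have hhalf : Fintype.card ι / 2 = k := by omega
  have hsize : Fintype.card ι - 2 * h = 2 * (k - h) := by omega
  rw [hhalf] at hyp ⊢
  rw [hsize]
  obtain ⟨f, hf⟩ := exists_forall_not_isCertificate hk (by omega) hyp
  refine ⟨f, fun ⟨C, b, hC, hm, hcert⟩ ↦ hf C b hC hm hcert, ?_⟩
  exact le_mBC (cubeSlice_nonempty (by omega)) fun x hx ↦ two_mul_le_BC hk (Nat.sub_le k h) hf hx

/-- Lovász-local-lemma bound: if `n` is even, `k = n/2`, and the nonnegative integer `h`
(with `2h ≤ n`) satisfies `2e·C(2h,h)·C(k,h)² ≤ 2^{C(2h,h)}`, then some Boolean function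
on the balanced slice of `{0,1}^n` has no balanced certificate of size `n - 2h`;
consequently it satisfies `mBC(f) ≥ n - 2h` (so there are functions with
`mBC(f) ≥ n - O(log log n)`). -/
theorem stmt7 (n h : ℕ) (hn : Even n) (hhn : 2 * h ≤ n)
    (hyp : 2 * Real.exp 1 * (Nat.choose (2 * h) h : ℝ) * (Nat.choose (n / 2) h : ℝ) ^ 2 ≤
      (2 : ℝ) ^ (Nat.choose (2 * h) h)) :
    ∃ f : (Fin n → Bool) → Bool,
      (¬ ∃ (C : Fin n → Option Bool) (b : Bool), BalancedCert C ∧ certSize C = n - 2 * h ∧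
          IsCertificate (cubeSlice (Fin n) (n / 2)) f C b) ∧
      n - 2 * h ≤ mBC (cubeSlice (Fin n) (n / 2)) f := by
  simpa only [Fintype.card_fin] using stmt7_general (ι := Fin n) h (by simpa) (by simpa) (by simpa)
end

section
/- There exists a constant c > 0 such that for all sufficiently large even n there exists a Boolean function f on the balanced slice of {0,1}^n with deterministic query complexity D(f) ≥ n − c · log log n. -/
/-!
Counting. Fix a tree of depth `d = n - k` and run it on the slice of weight `a`. A query whose
answer is not already determined uses up one of the `a` ones or one of the `n - a` zeros, and once
either kind runs out the input is known. So the effective leaves correspond to strings of length `d`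
with at most `a` ones and at most `n - a = d + k - a` zeros, of which there are at most
`(k + 1) * d.choose (d / 2)`, and at most `n ^ (2 * (k + 1) * d.choose (d / 2))` functions on the
slice have complexity at most `d`. The middle slice carries `2 ^ n.choose (n / 2)` functions, and
`n.choose (n / 2)` is at least `(3 / 2) ^ k * d.choose (d / 2)`. Hence some function needs more than
`d` queries as soon as `(3 / 2) ^ k > 2 * (k + 1) * log₂ n`, which already holds for some
`k = O(log log n)`.
-/

open Finset

variable {ι : Type}

namespace DTree

theorem eval_node_of_eq {x : ι → Bool} {i : ι} {b : Bool} (h : x i = b) (t₀ t₁ : DTree ι) :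
    (node i t₀ t₁).eval x = (cond b t₁ t₀).eval x := by
  cases b <;> simp [eval, h]

theorem cost_node_of_eq {x : ι → Bool} {i : ι} {b : Bool} (h : x i = b) (t₀ t₁ : DTree ι) :
    (node i t₀ t₁).cost x = (cond b t₁ t₀).cost x + 1 := by
  cases b <;> simp [cost, h, add_comm]

/-- On inputs that are constant outside `A`, queries outside `A` can be skipped, so a tree may be
assumed to start with a query in `A`. -/
theorem exists_mem_forall_exists_eval_eq_and_cost_le {S : Set (ι → Bool)} {A : Finset ι}
    (hA : A.Nonempty) (hS : ∀ i ∉ A, ∃ b, ∀ x ∈ S, x i = b) {d : ℕ} (T : DTree ι)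
    (hT : ∀ x ∈ S, T.cost x ≤ d + 1) :
    ∃ i ∈ A, ∀ b, ∃ T' : DTree ι, ∀ x ∈ S, x i = b → T'.eval x = T.eval x ∧ T'.cost x ≤ d := by
  induction T with
  | leaf c =>
    obtain ⟨i, hi⟩ := hA
    exact ⟨i, hi, fun _ => ⟨leaf c, fun _ _ _ => ⟨rfl, Nat.zero_le _⟩⟩⟩
  | node j t₀ t₁ ih₀ ih₁ =>
    by_cases hj : j ∈ A
    · refine ⟨j, hj, fun b => ⟨cond b t₁ t₀, fun x hx hxb => ⟨(eval_node_of_eq hxb _ _).symm, ?_⟩⟩⟩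
      have hcost := hT x hx
      rwa [cost_node_of_eq hxb, Nat.add_le_add_iff_right] at hcost
    · obtain ⟨b, hb⟩ := hS j hj
      have hcost : ∀ x ∈ S, (cond b t₁ t₀).cost x ≤ d + 1 := fun x hx =>
        (Nat.le_succ _).trans ((cost_node_of_eq (hb x hx) t₀ t₁).symm.trans_le (hT x hx))
      have heval : ∀ x ∈ S, (node j t₀ t₁).eval x = (cond b t₁ t₀).eval x := fun x hx =>
        eval_node_of_eq (hb x hx) t₀ t₁
      obtain ⟨i, hi, h⟩ : ∃ i ∈ A, ∀ c, ∃ T' : DTree ι, ∀ x ∈ S, x i = c →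
          T'.eval x = (cond b t₁ t₀).eval x ∧ T'.cost x ≤ d := by
        cases b
        exacts [ih₀ hcost, ih₁ hcost]
      refine ⟨i, hi, fun c => (h c).imp fun T' hT' x hx hxc => ?_⟩
      rw [heval x hx]
      exact hT' x hx hxc

end DTree

theorem dependsOn_comp_update {κ β : Type*} {α : κ → Type*} [DecidableEq κ]
    {f : (∀ i, α i) → β} {A : Set κ} {i : κ} (hf : DependsOn f (insert i A)) (b : α i) :
    DependsOn (fun x => f (Function.update x i b)) A := by
  refine fun x y hxy => hf fun j hj => ?_
  obtain rfl | hji := eq_or_ne j i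
  · simp only [Function.update_self]
  · simpa only [Function.update_of_ne hji] using hxy j (hj.resolve_left hji)

theorem DTree.exists_eval_eq_of_dependsOn (A : Finset ι) {f : (ι → Bool) → Bool}
    (hf : DependsOn f (A : Set ι)) : ∃ T : DTree ι, ∀ x, T.eval x = f x := by
  classical
  induction A using Finset.induction_on generalizing f with
  | empty => exact ⟨leaf (f fun _ => false), fun x => hf (by simp)⟩
  | insert i A _ ih =>
    rw [coe_insert] at hf
    choose T hT using fun b => ih (dependsOn_comp_update hf b)
    refine ⟨node i (T false) (T true), fun x => ?_⟩
    have hcond : cond (x i) (T true) (T false) = T (x i) := by cases x i <;> rfl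
    rw [eval_node_of_eq rfl, hcond, hT, Function.update_eq_self]

theorem exists_computes_cost_le_of_Dquery_le [Finite ι] {S : Set (ι → Bool)}
    {f : (ι → Bool) → Bool} {d : ℕ} (h : Dquery S f ≤ d) :
    ∃ T : DTree ι, Computes T S f ∧ ∀ x ∈ S, T.cost x ≤ d := by
  have := Fintype.ofFinite ι
  classical
  obtain ⟨T, hT⟩ := DTree.exists_eval_eq_of_dependsOn univ
    (by simpa only [coe_univ] using dependsOn_univ f)
  have hne : {e | ∃ T : DTree ι, Computes T S f ∧ ∀ x ∈ S, T.cost x ≤ e}.Nonempty :=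
    ⟨univ.sup T.cost, T, fun x _ => hT x, fun x _ => le_sup (f := T.cost) (mem_univ x)⟩
  obtain ⟨T', hcomp, hcost⟩ := Nat.sInf_mem hne
  exact ⟨T', hcomp, fun x hx => (hcost x hx).trans h⟩

/-- The subsets of `S` that can be decided with at most `d` queries on each input in `S`. A Boolean
function on the domain `S` is encoded as the set of inputs in `S` that it accepts. -/
def decidableSubsets (S : Set (ι → Bool)) (d : ℕ) : Set (Set (ι → Bool)) :=
  {U | ∃ T : DTree ι, (∀ x ∈ S, T.cost x ≤ d) ∧ {x ∈ S | T.eval x = true} = U}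

theorem exists_lt_Dquery_of_ncard_decidableSubsets_lt [Finite ι] {S : Set (ι → Bool)} {d : ℕ}
    (h : (decidableSubsets S d).ncard < 2 ^ S.ncard) : ∃ f, d < Dquery S f := by
  by_contra! hle
  have hsub : 𝒫 S ⊆ decidableSubsets S d := by
    classical
    intro U hU
    obtain ⟨T, hcomp, hcost⟩ := exists_computes_cost_le_of_Dquery_le (hle fun x => decide (x ∈ U))
    refine ⟨T, hcost, Set.ext fun x => ⟨fun ⟨hx, hTx⟩ => ?_, fun hx => ⟨hU hx, ?_⟩⟩⟩
    · simpa only [hcomp x hx, decide_eq_true_eq] using hTx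
    · simpa only [hcomp x (hU hx), decide_eq_true_eq] using hx
  have := Set.ncard_le_ncard hsub
  rw [Set.ncard_powerset] at this
  exact this.not_gt h

theorem decidableSubsets_zero_subset (S : Set (ι → Bool)) : decidableSubsets S 0 ⊆ {∅, S} := by
  rintro _ ⟨T, hT, rfl⟩
  cases T with
  | leaf b => cases b <;> simp [DTree.eval]
  | node i t₀ t₁ =>
    have hS : S = ∅ := Set.eq_empty_of_forall_notMem fun x hx => by
      have := hT x hx
      rw [DTree.cost_node_of_eq rfl] at this
      omega
    simp [hS]

theorem decidableSubsets_subset_of_subsingleton {S : Set (ι → Bool)} (hS : S.Subsingleton)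
    (d : ℕ) : decidableSubsets S d ⊆ {∅, S} := by
  rintro _ ⟨T, -, rfl⟩
  have hsub : {x ∈ S | T.eval x = true} ⊆ S := Set.sep_subset _ _
  obtain rfl | ⟨x, rfl⟩ := hS.eq_empty_or_singleton
  · exact Or.inl (Set.subset_empty_iff.1 hsub)
  · exact Set.subset_singleton_iff_eq.1 hsub

theorem decidableSubsets_succ_subset {S : Set (ι → Bool)} {A : Finset ι} (hA : A.Nonempty)
    (hS : ∀ i ∉ A, ∃ b, ∀ x ∈ S, x i = b) (d : ℕ) :
    decidableSubsets S (d + 1) ⊆ ⋃ i ∈ A, (fun p => p.1 ∪ p.2) ''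
      (decidableSubsets {x ∈ S | x i = false} d ×ˢ decidableSubsets {x ∈ S | x i = true} d) := by
  rintro _ ⟨T, hT, rfl⟩
  obtain ⟨i, hi, hquery⟩ := T.exists_mem_forall_exists_eval_eq_and_cost_le hA hS hT
  choose T' hT' using hquery
  have hmem (b : Bool) : {x ∈ S | x i = b ∧ T.eval x = true} ∈
      decidableSubsets {x ∈ S | x i = b} d := by
    refine ⟨T' b, fun x hx => (hT' b x hx.1 hx.2).2, Set.ext fun x => ?_⟩
    simp only [Set.mem_ofPred_eq, and_assoc]
    exact and_congr_right fun hx => and_congr_right fun hxb => by rw [(hT' b x hx hxb).1]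
  have hunion : {x ∈ S | x i = false ∧ T.eval x = true} ∪ {x ∈ S | x i = true ∧ T.eval x = true} =
      {x ∈ S | T.eval x = true} := by
    ext x
    cases h : x i <;> simp [h]
  exact Set.mem_biUnion hi ⟨(_, _), ⟨hmem false, hmem true⟩, hunion⟩

theorem ncard_decidableSubsets_succ_le [Finite ι] {S : Set (ι → Bool)} {A : Finset ι}
    (hA : A.Nonempty) (hS : ∀ i ∉ A, ∃ b, ∀ x ∈ S, x i = b) (d : ℕ) :
    (decidableSubsets S (d + 1)).ncard ≤ ∑ i ∈ A,
      (decidableSubsets {x ∈ S | x i = false} d).ncard *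
        (decidableSubsets {x ∈ S | x i = true} d).ncard := by
  refine (Set.ncard_le_ncard (decidableSubsets_succ_subset hA hS d)).trans
    ((set_ncard_biUnion_le _ _).trans (sum_le_sum fun i _ => ?_))
  exact (Set.ncard_image_le).trans_eq Set.ncard_prod

theorem mul_ncard_decidableSubsets_succ_le [Finite ι] {S : Set (ι → Bool)} {A : Finset ι}
    (hA : A.Nonempty) (hS : ∀ i ∉ A, ∃ b, ∀ x ∈ S, x i = b) {n d B : ℕ} (hAn : #A ≤ n)
    (hB : ∀ i ∈ A, (n * (decidableSubsets {x ∈ S | x i = false} d).ncard) *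
      (n * (decidableSubsets {x ∈ S | x i = true} d).ncard) ≤ B) :
    n * (decidableSubsets S (d + 1)).ncard ≤ B := by
  let N (b : Bool) (i : ι) := (decidableSubsets {x ∈ S | x i = b} d).ncard
  refine Nat.le_of_mul_le_mul_left ?_ (hA.card_pos.trans_le hAn)
  calc
    n * (n * (decidableSubsets S (d + 1)).ncard)
        ≤ n * (n * ∑ i ∈ A, N false i * N true i) := by
      gcongr
      exact ncard_decidableSubsets_succ_le hA hS d
    _ = ∑ i ∈ A, (n * N false i) * (n * N true i) := by
      simp only [mul_sum]
      exact sum_congr rfl fun i _ => by ring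
    _ ≤ #A • B := sum_le_card_nsmul _ _ _ hB
    _ ≤ n * B := Nat.mul_le_mul_right _ hAn

/-- `S` lies in a subcube with free coordinates `A`, and its elements have exactly `a` ones in `A`.
These are the inputs still possible after some queries; asking only for containment avoids
recording the answers received. -/
structure IsSubslice (S : Set (ι → Bool)) (A : Finset ι) (a : ℕ) : Prop where
  const_of_notMem : ∀ i ∉ A, ∃ b, ∀ x ∈ S, x i = b
  card_ones : ∀ x ∈ S, #{i ∈ A | x i = true} = a

namespace IsSubslice

variable {S : Set (ι → Bool)} {A : Finset ι} {a : ℕ}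

theorem restrict [DecidableEq ι] {i : ι} {b : Bool} (h : IsSubslice S A (a + b.toNat))
    (hi : i ∈ A) : IsSubslice {x ∈ S | x i = b} (A.erase i) a where
  const_of_notMem j hj := by
    obtain rfl | hji := eq_or_ne j i
    · exact ⟨b, fun x hx => hx.2⟩
    · obtain ⟨c, hc⟩ := h.const_of_notMem j fun hjA => hj (mem_erase.2 ⟨hji, hjA⟩)
      exact ⟨c, fun x hx => hc x hx.1⟩
  card_ones := by
    rintro x ⟨hx, hxi⟩
    have hcard := h.card_ones x hx
    rw [← insert_erase hi, filter_insert] at hcard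
    cases b <;> simpa [hxi] using hcard

theorem subsingleton_of_forall_mem {b : Bool} (h : IsSubslice S A a)
    (hb : ∀ x ∈ S, ∀ i ∈ A, x i = b) : S.Subsingleton := by
  refine fun x hx y hy => funext fun i => ?_
  by_cases hi : i ∈ A
  · rw [hb x hx i hi, hb y hy i hi]
  · obtain ⟨c, hc⟩ := h.const_of_notMem i hi
    rw [hc x hx, hc y hy]

theorem subsingleton_of_zero (h : IsSubslice S A 0) : S.Subsingleton :=
  h.subsingleton_of_forall_mem (b := false) fun x hx i hi => by
    simpa using filter_eq_empty_iff.1 (card_eq_zero.1 (h.card_ones x hx)) hi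

theorem subsingleton_of_card (h : IsSubslice S A #A) : S.Subsingleton :=
  h.subsingleton_of_forall_mem fun x hx => card_filter_eq_iff.1 (h.card_ones x hx)

end IsSubslice

theorem isSubslice_cubeSlice [Fintype ι] (a : ℕ) : IsSubslice (cubeSlice ι a) univ a where
  const_of_notMem i hi := absurd (mem_univ i) hi
  card_ones _ hx := hx

/-- The number of strings in `{0,1}^d` whose weight lies in the window `[a - k, a]`. It
bounds the number of effective leaves of a depth-`d` tree on inputs with `a` ones among `d + k`
coordinates. The truncated subtraction is harmless, as weights are nonnegative. -/
def chooseWindow (k d a : ℕ) : ℕ := ∑ j ∈ Ico (a - k) (a + 1), d.choose j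

theorem chooseWindow_pos {k d a : ℕ} (h : a ≤ d + k) : 0 < chooseWindow k d a := by
  refine sum_pos' (fun _ _ => Nat.zero_le _) ⟨min a d, mem_Ico.2 ?_, Nat.choose_pos ?_⟩ <;> omega

theorem chooseWindow_succ_succ (k d a : ℕ) :
    chooseWindow k (d + 1) (a + 1) = chooseWindow k d a + chooseWindow k d (a + 1) := by
  unfold chooseWindow
  obtain hk | hk := le_or_gt k a
  · rw [Nat.sub_add_comm hk]
    simp only [← sum_Ico_add' _ _ _ 1, Nat.choose_succ_succ', sum_add_distrib]
  · have hk' : a - k = 0 := by omega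
    have hk'' : a + 1 - k = 0 := by omega
    rw [hk', hk'', Nat.Ico_zero_eq_range, Nat.Ico_zero_eq_range, sum_range_succ' _ (a + 1),
      sum_range_succ' _ (a + 1)]
    simp only [Nat.choose_succ_succ', sum_add_distrib, Nat.choose_zero_right, add_assoc]

theorem chooseWindow_le (k d a : ℕ) : chooseWindow k d a ≤ (k + 1) * d.choose (d / 2) := calc
  chooseWindow k d a ≤ #(Ico (a - k) (a + 1)) • d.choose (d / 2) :=
    sum_le_card_nsmul _ _ _ fun j _ => Nat.choose_le_middle j d
  _ ≤ (k + 1) * d.choose (d / 2) := by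
    rw [Nat.card_Ico, smul_eq_mul]
    gcongr
    omega

theorem mul_ncard_le_pow_of_subset_pair {α : Type*} {F : Set α} {x y : α}
    (hF : F ⊆ {x, y}) {n p : ℕ} (hn : 2 ≤ n) (hp : 0 < p) : n * F.ncard ≤ n ^ (2 * p) := by
  have hcard : F.ncard ≤ 2 := calc
    F.ncard ≤ ({x, y} : Set α).ncard := Set.ncard_le_ncard hF
    _ ≤ 2 := (Set.ncard_insert_le _ _).trans_eq (by rw [Set.ncard_singleton])
  calc
    n * F.ncard ≤ n * n := Nat.mul_le_mul_left n (hcard.trans hn)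
    _ = n ^ 2 := (sq n).symm
    _ ≤ n ^ (2 * p) := Nat.pow_le_pow_right (by omega) (by omega)

/-- The spare factor `n` on the left absorbs the choice of the queried coordinate in the
induction. -/
theorem IsSubslice.mul_ncard_decidableSubsets_le [Finite ι] {n : ℕ} (hn : 2 ≤ n) {k d a : ℕ}
    {S : Set (ι → Bool)} {A : Finset ι} (hS : IsSubslice S A a) (hA : #A = d + k)
    (hAn : #A ≤ n) (ha : a ≤ d + k) :
    n * (decidableSubsets S d).ncard ≤ n ^ (2 * chooseWindow k d a) := by
  classical
  induction d generalizing S A a with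
  | zero =>
    exact mul_ncard_le_pow_of_subset_pair (decidableSubsets_zero_subset S) hn (chooseWindow_pos ha)
  | succ d ih =>
    by_cases hsing : S.Subsingleton
    · exact mul_ncard_le_pow_of_subset_pair (decidableSubsets_subset_of_subsingleton hsing _) hn
        (chooseWindow_pos ha)
    have hlt : a < d + 1 + k := ha.lt_of_ne fun h => by
      rw [h, ← hA] at hS
      exact hsing hS.subsingleton_of_card
    obtain _ | a := a
    · exact absurd hS.subsingleton_of_zero hsing
    refine mul_ncard_decidableSubsets_succ_le (card_pos.1 (by omega)) hS.const_of_notMem hAn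
      fun i hi => ?_
    have hcard : #(A.erase i) = d + k := by rw [card_erase_of_mem hi]; omega
    have hle : #(A.erase i) ≤ n := card_erase_le.trans hAn
    have hfalse := ih (hS.restrict (a := a + 1) (b := false) hi) hcard hle (by omega)
    have htrue := ih (hS.restrict (a := a) (b := true) hi) hcard hle (by omega)
    refine (Nat.mul_le_mul hfalse htrue).trans_eq ?_
    rw [chooseWindow_succ_succ, ← pow_add, ← mul_add, add_comm (chooseWindow k d (a + 1))]

theorem ncard_cubeSlice [Fintype ι] (a : ℕ) :
    (cubeSlice ι a).ncard = (Fintype.card ι).choose a := by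
  classical
  have himage : cubeSlice ι a =
      (fun (s : Finset ι) i => decide (i ∈ s)) '' (powersetCard a univ : Finset (Finset ι)) := by
    ext x
    refine ⟨fun hx =>
      ⟨univ.filter fun i => x i = true, by simpa [cubeSlice, hamWeight] using hx, by ext; simp⟩, ?_⟩
    rintro ⟨s, hs, rfl⟩
    simpa [cubeSlice, hamWeight] using hs
  have hinj : Function.Injective fun (s : Finset ι) i => decide (i ∈ s) := fun s t h => by
    ext i
    simpa using congrFun h i
  rw [himage, Set.ncard_image_of_injective _ hinj, Set.ncard_coe_finset, card_powersetCard,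
    card_univ]

theorem three_mul_choose_half_le {m : ℕ} (hm : 0 < m) :
    3 * m.choose (m / 2) ≤ 2 * (m + 1).choose ((m + 1) / 2) := by
  obtain ⟨j, rfl | rfl⟩ := m.even_or_odd'
  · have habsorb := Nat.add_one_mul_choose_eq (2 * j) j
    rw [Nat.choose_symm_half] at habsorb
    rw [show 2 * j / 2 = j by omega, show (2 * j + 1) / 2 = j by omega]
    refine Nat.le_of_mul_le_mul_right ?_ j.succ_pos
    calc
      3 * (2 * j).choose j * (j + 1) = (3 * (j + 1)) * (2 * j).choose j := by ring
      _ ≤ (2 * (2 * j + 1)) * (2 * j).choose j := Nat.mul_le_mul_right _ (by omega)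
      _ = 2 * ((2 * j + 1) * (2 * j).choose j) := by ring
      _ = 2 * (2 * j + 1).choose j * (j + 1) := by rw [habsorb]; ring
  · rw [show (2 * j + 1) / 2 = j by omega, show (2 * j + 1 + 1) / 2 = j + 1 by omega,
      Nat.choose_succ_succ', Nat.choose_symm_half]
    omega

theorem three_pow_mul_choose_half_le {d : ℕ} (hd : 0 < d) (k : ℕ) :
    3 ^ k * d.choose (d / 2) ≤ 2 ^ k * (d + k).choose ((d + k) / 2) := by
  induction k with
  | zero => simp
  | succ k ih =>
    calc
      3 ^ (k + 1) * d.choose (d / 2) = 3 * (3 ^ k * d.choose (d / 2)) := by ring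
      _ ≤ 3 * (2 ^ k * (d + k).choose ((d + k) / 2)) := Nat.mul_le_mul_left _ ih
      _ = 2 ^ k * (3 * (d + k).choose ((d + k) / 2)) := by ring
      _ ≤ 2 ^ k * (2 * (d + k + 1).choose ((d + k + 1) / 2)) :=
        Nat.mul_le_mul_left _ (three_mul_choose_half_le (by omega))
      _ = 2 ^ (k + 1) * (d + (k + 1)).choose ((d + (k + 1)) / 2) := by
        rw [← add_assoc, pow_succ, mul_assoc]

theorem exists_lt_Dquery_cubeSlice [Fintype ι] {a d k L : ℕ} (hι : Fintype.card ι = d + k)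
    (hι₂ : 2 ≤ Fintype.card ι) (hL : Fintype.card ι ≤ 2 ^ L) (ha : a ≤ Fintype.card ι)
    (h : 2 * (k + 1) * L * d.choose (d / 2) < (Fintype.card ι).choose a) :
    ∃ f, d < Dquery (cubeSlice ι a) f := by
  apply exists_lt_Dquery_of_ncard_decidableSubsets_lt
  rw [ncard_cubeSlice]
  calc
    (decidableSubsets (cubeSlice ι a) d).ncard
        ≤ Fintype.card ι * (decidableSubsets (cubeSlice ι a) d).ncard :=
      Nat.le_mul_of_pos_left _ (by omega)
    _ ≤ Fintype.card ι ^ (2 * chooseWindow k d a) :=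
      (isSubslice_cubeSlice a).mul_ncard_decidableSubsets_le hι₂ hι le_rfl (hι ▸ ha)
    _ ≤ (2 ^ L) ^ (2 * ((k + 1) * d.choose (d / 2))) :=
      (Nat.pow_le_pow_left hL _).trans
        (Nat.pow_le_pow_right (by positivity) (Nat.mul_le_mul_left _ (chooseWindow_le k d a)))
    _ = 2 ^ (2 * (k + 1) * L * d.choose (d / 2)) := by rw [← pow_mul]; ring
    _ < 2 ^ (Fintype.card ι).choose a := Nat.pow_lt_pow_right one_lt_two h

theorem exists_lt_Dquery_cubeSlice_half [Fintype ι] {d k L : ℕ} (hι : Fintype.card ι = d + k)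
    (hι₂ : 2 ≤ Fintype.card ι) (hd : 0 < d) (hL : Fintype.card ι ≤ 2 ^ L)
    (h : 2 ^ k * (2 * (k + 1) * L) < 3 ^ k) :
    ∃ f, d < Dquery (cubeSlice ι (Fintype.card ι / 2)) f := by
  refine exists_lt_Dquery_cubeSlice hι hι₂ hL (Nat.div_le_self _ 2) ?_
  refine Nat.lt_of_mul_lt_mul_left (a := 2 ^ k) ?_
  calc
    2 ^ k * (2 * (k + 1) * L * d.choose (d / 2))
        = 2 ^ k * (2 * (k + 1) * L) * d.choose (d / 2) := by ring
    _ < 3 ^ k * d.choose (d / 2) := Nat.mul_lt_mul_of_pos_right h (Nat.choose_pos (by omega))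
    _ ≤ 2 ^ k * (Fintype.card ι).choose (Fintype.card ι / 2) :=
      hι ▸ three_pow_mul_choose_half_le hd k

theorem two_pow_mul_lt_three_pow {m : ℕ} (hm : 3 ≤ m) :
    2 ^ (8 * m) * (2 * (8 * m + 1) * 2 ^ (m + 1)) < 3 ^ (8 * m) := by
  have hlin : 4 * (8 * m + 1) < 12 ^ m := by
    induction m, hm using Nat.le_induction with
    | base => norm_num
    | succ m hm ih => rw [pow_succ]; omega
  calc
    2 ^ (8 * m) * (2 * (8 * m + 1) * 2 ^ (m + 1)) = (2 ^ 9) ^ m * (4 * (8 * m + 1)) := by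
      rw [← pow_mul, show 9 * m = 8 * m + m by ring, pow_add, pow_succ]; ring
    _ < (2 ^ 9) ^ m * 12 ^ m := Nat.mul_lt_mul_of_pos_left hlin (by positivity)
    _ = (2 ^ 9 * 12) ^ m := (mul_pow _ _ _).symm
    _ ≤ (3 ^ 8) ^ m := Nat.pow_le_pow_left (by norm_num) m
    _ = 3 ^ (8 * m) := (pow_mul 3 8 m).symm

theorem eight_mul_le_two_pow {l : ℕ} (hl : 6 ≤ l) : 8 * l ≤ 2 ^ l := by
  induction l, hl using Nat.le_induction with
  | base => norm_num
  | succ l hl ih => rw [pow_succ]; omega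

theorem natLog_natLog_le_logb_logb {b n : ℕ} (hb : 1 < b) (hn : b ≤ n) :
    (Nat.log b (Nat.log b n) : ℝ) ≤ Real.logb b (Real.logb b n) := by
  have hpos : (0 : ℝ) < Nat.log b n := by exact_mod_cast Nat.log_pos hb hn
  exact (Real.natLog_le_logb _ _).trans
    (Real.logb_le_logb_of_le (by exact_mod_cast hb) hpos (Real.natLog_le_logb _ _))

theorem exists_card_lt_Dquery_cubeSlice_half_add [Fintype ι] (hι : 256 ≤ Fintype.card ι) :
    ∃ f, Fintype.card ι < Dquery (cubeSlice ι (Fintype.card ι / 2)) f +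
      8 * Nat.log 2 (Nat.log 2 (Fintype.card ι)) := by
  set n := Fintype.card ι
  set l := Nat.log 2 n
  set m := Nat.log 2 l
  have hl : 8 ≤ l := Nat.le_log_of_pow_le one_lt_two hι
  have hm : 3 ≤ m := Nat.le_log_of_pow_le one_lt_two hl
  have hlt : 8 * m < n := calc
    8 * m < 8 * l := Nat.mul_lt_mul_of_pos_left (Nat.log_lt_self 2 (by omega)) (by norm_num)
    _ ≤ 2 ^ l := eight_mul_le_two_pow (by omega)
    _ ≤ n := Nat.pow_log_le_self 2 (by omega)
  have hle : n ≤ 2 ^ 2 ^ (m + 1) := calc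
    n ≤ 2 ^ (l + 1) := (Nat.lt_pow_succ_log_self one_lt_two n).le
    _ ≤ 2 ^ 2 ^ (m + 1) :=
      Nat.pow_le_pow_right two_pos (Nat.lt_pow_succ_log_self one_lt_two l)
  obtain ⟨d, hd⟩ := Nat.exists_eq_add_of_le' hlt.le
  obtain ⟨f, hf⟩ := exists_lt_Dquery_cubeSlice_half hd (by omega) (by omega) hle
    (two_pow_mul_lt_three_pow hm)
  exact ⟨f, hd.trans_lt (Nat.add_lt_add_right hf _)⟩

theorem stmt8_general (n : ℕ) (hn : 256 ≤ n) :
    ∃ f : (Fin n → Bool) → Bool,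
      (n : ℝ) - 8 * Real.logb 2 (Real.logb 2 n) ≤
        (Dquery (cubeSlice (Fin n) (n / 2)) f : ℝ) := by
  obtain ⟨f, hf⟩ := exists_card_lt_Dquery_cubeSlice_half_add (ι := Fin n)
    (hn.trans_eq (Fintype.card_fin n).symm)
  rw [Fintype.card_fin] at hf
  have hf' : (n : ℝ) ≤ Dquery (cubeSlice (Fin n) (n / 2)) f + 8 * Nat.log 2 (Nat.log 2 n) := by
    exact_mod_cast hf.le
  have hlog : (Nat.log 2 (Nat.log 2 n) : ℝ) ≤ Real.logb 2 (Real.logb 2 n) := by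
    exact_mod_cast natLog_natLog_le_logb_logb one_lt_two (by omega : 2 ≤ n)
  exact ⟨f, by linarith⟩

/-- There is a constant `c > 0` such that for all sufficiently large even `n`, some Boolean
function on the balanced slice of `{0,1}^n` has deterministic query complexity at least
`n - c·log log n`. -/
theorem stmt8 : ∃ c : ℝ, 0 < c ∧ ∃ N : ℕ, ∀ n : ℕ, N ≤ n → Even n →
    ∃ f : (Fin n → Bool) → Bool,
      (n : ℝ) - c * Real.logb 2 (Real.logb 2 n) ≤
        (Dquery (cubeSlice (Fin n) (n / 2)) f : ℝ) :=
  ⟨8, by norm_num, 256, fun n hn _ => stmt8_general n hn⟩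
end

section
/- Identify the ground set of the Johnson graph J(n,k) with ℤ_n. For each i ∈ ℤ_n, the set I_i = {S ⊆ ℤ_n : |S| = k and Σ_{x∈S} x = i} is an independent set in J(n,k). -/
/-!
Adjacent vertices `S`, `T` of a Johnson graph differ by exchanging a single element `a ∈ S` for a
single element `b ∈ T`. Cancelling the common part `S ∩ T`, equal sums would force `a = b`.
-/

section SymmDiff

variable {α : Type*} [DecidableEq α] {s t : Finset α}

theorem card_symmDiff_eq_card_sdiff_add_card_sdiff (s t : Finset α) :
    (symmDiff s t).card = (s \ t).card + (t \ s).card :=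
  Finset.card_union_of_disjoint disjoint_sdiff_sdiff

theorem exists_sdiff_eq_singleton_of_card_symmDiff_eq_two (hcard : s.card = t.card)
    (hsymm : (symmDiff s t).card = 2) : ∃ a b, a ≠ b ∧ s \ t = {a} ∧ t \ s = {b} := by
  have hsdiff : (s \ t).card = (t \ s).card := Finset.card_sdiff_comm hcard
  rw [card_symmDiff_eq_card_sdiff_add_card_sdiff] at hsymm
  obtain ⟨a, ha⟩ := Finset.card_eq_one.mp (show (s \ t).card = 1 by lia)
  obtain ⟨b, hb⟩ := Finset.card_eq_one.mp (show (t \ s).card = 1 by lia)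
  have hdisj : Disjoint ({a} : Finset α) {b} := ha ▸ hb ▸ disjoint_sdiff_sdiff
  exact ⟨a, b, Finset.disjoint_singleton.mp hdisj, ha, hb⟩

end SymmDiff

theorem stmt11_general {α M : Type*} [DecidableEq α] [AddCancelCommMonoid M] {f : α → M}
    (hf : Function.Injective f) {S T : Finset α} (hcard : S.card = T.card)
    (hsum : ∑ x ∈ S, f x = ∑ x ∈ T, f x) : (symmDiff S T).card ≠ 2 := by
  intro hsymm
  obtain ⟨a, b, hab, hST, hTS⟩ := exists_sdiff_eq_singleton_of_card_symmDiff_eq_two hcard hsymm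
  have hsdiff : ∑ x ∈ S \ T, f x = ∑ x ∈ T \ S, f x :=
    Finset.sum_sdiff_eq_sum_sdiff_iff.mpr hsum
  rw [hST, hTS, Finset.sum_singleton, Finset.sum_singleton] at hsdiff
  exact hab (hf hsdiff)

/-- With the ground set of the Johnson graph `J(n,k)` identified with `ℤ_n`, each set
`I_i = {S : |S| = k, Σ_{x ∈ S} x = i}` is an independent set in `J(n,k)`: no two of its
members have symmetric difference of size exactly `2`. -/
theorem stmt11 (n k : ℕ) (hn : 1 ≤ n) (i : ZMod n)
    (S T : Finset (ZMod n)) (hS : S.card = k) (hT : T.card = k)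
    (hSsum : (∑ x ∈ S, x) = i) (hTsum : (∑ x ∈ T, x) = i) :
    (symmDiff S T).card ≠ 2 :=
  stmt11_general Function.injective_id (hS.trans hT.symm) (hSsum.trans hTsum.symm)
end

section
/- For all n ≥ 1 and 0 ≤ k ≤ n, the Johnson graph J(n,k) contains an independent set of size at least (1/n)·C(n,k), where C(n,k) is the binomial coefficient. -/
/-! Label the ground set by the elements of an abelian group of order `n` and colour each subset by
the sum of its labels. Two `k`-subsets adjacent in the Johnson graph differ by exchanging one
element for another, which changes the sum. So this is a proper colouring with `n` colours, and some
colour class has at least the average size `C(n,k) / n`. -/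

open Finset SimpleGraph

theorem card_symmDiff_eq_two_mul_card_sdiff {α : Type*} [DecidableEq α] {s t : Finset α}
    (h : #s = #t) : #(symmDiff s t) = 2 * #(s \ t) := by
  have union : #(symmDiff s t) = #(s \ t) + #(t \ s) := card_union_of_disjoint disjoint_sdiff_sdiff
  rw [union, ← card_sdiff_comm h, two_mul]

theorem sum_ne_sum_of_card_sdiff_eq_one {α A : Type*} [DecidableEq α] [AddCancelCommMonoid A]
    {w : α → A} (hw : Function.Injective w) {s t : Finset α} (hst : #(s \ t) = 1)
    (hts : #(t \ s) = 1) : ∑ i ∈ s, w i ≠ ∑ i ∈ t, w i := by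
  obtain ⟨a, ha⟩ := card_eq_one.mp hst
  obtain ⟨b, hb⟩ := card_eq_one.mp hts
  have hab : a ≠ b :=
    disjoint_singleton.mp (ha ▸ hb ▸ disjoint_sdiff_sdiff : Disjoint ({a} : Finset α) {b})
  rw [← sum_sdiff_ne_sum_sdiff_iff, ha, hb, sum_singleton, sum_singleton]
  exact hw.ne hab

theorem card_le_mul_indepNum_of_colorable {V : Type*} [Finite V] {G : SimpleGraph V} {n : ℕ}
    (hG : G.Colorable n) : Nat.card V ≤ n * G.indepNum := by
  classical
  have := Fintype.ofFinite V
  obtain ⟨C⟩ := hG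
  have class_le (c : Fin n) : #{v | C v = c} ≤ G.indepNum :=
    IsIndepSet.card_le_indepNum <| by
      rw [coe_filter_univ]
      exact C.isIndepSet_colorClass c
  simpa [mul_comm] using
    card_le_mul_card_image_of_maps_to (fun v _ ↦ mem_univ (C v)) G.indepNum fun c _ ↦ class_le c

/-- The Johnson graph `J(α, k)` on the `k`-element subsets of an arbitrary ground set `α`, which
need not be finite; `J(n, k)` is `johnsonGraph (Fin n) k`. -/
def johnsonGraph (α : Type*) [DecidableEq α] (k : ℕ) : SimpleGraph (Set.powersetCard α k) where
  Adj S T := #(symmDiff S.1 T.1) = 2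
  symm := ⟨fun S T h ↦ by rwa [symmDiff_comm]⟩
  loopless := ⟨fun S h ↦ by simp at h⟩

namespace johnsonGraph

variable {α : Type*} [DecidableEq α] {k : ℕ}

theorem card_sdiff_eq_one_of_adj {S T : Set.powersetCard α k} (h : (johnsonGraph α k).Adj S T) :
    #(S.1 \ T.1) = 1 := by
  have two : #(symmDiff S.1 T.1) = 2 := h
  have := card_symmDiff_eq_two_mul_card_sdiff (S.2.trans T.2.symm)
  omega

/-- The proper colouring of the Johnson graph by subset sums, for a labelling `w` of the ground set
by distinct elements of a cancellative commutative monoid. -/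
def sumColoring {A : Type*} [AddCancelCommMonoid A] (w : α → A) (hw : Function.Injective w) :
    (johnsonGraph α k).Coloring A :=
  Coloring.mk (fun S ↦ ∑ i ∈ S.1, w i) fun h ↦
    sum_ne_sum_of_card_sdiff_eq_one hw (card_sdiff_eq_one_of_adj h)
      (card_sdiff_eq_one_of_adj h.symm)

variable (α k) [Fintype α] [Nonempty α]

theorem colorable_card : (johnsonGraph α k).Colorable (Fintype.card α) := by
  let e := Fintype.equivFin α
  exact ⟨sumColoring e e.injective⟩

theorem choose_le_card_mul_indepNum :
    (Fintype.card α).choose k ≤ Fintype.card α * (johnsonGraph α k).indepNum := by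
  rw [← Nat.card_eq_fintype_card, ← Set.powersetCard.card, Nat.card_eq_fintype_card (α := α)]
  exact card_le_mul_indepNum_of_colorable (colorable_card α k)

end johnsonGraph

theorem stmt12_general (α : Type*) [Fintype α] [DecidableEq α] [Nonempty α] (k : ℕ) :
    ∃ I : Finset (Finset α),
      (∀ S ∈ I, #S = k) ∧
      (∀ S ∈ I, ∀ T ∈ I, #(symmDiff S T) ≠ 2) ∧
      ((Fintype.card α).choose k : ℝ) / Fintype.card α ≤ #I := by
  obtain ⟨J, indep, hJ⟩ := (johnsonGraph α k).exists_isNIndepSet_indepNum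
  refine ⟨J.map (Function.Embedding.subtype _), ?card_eq, ?indep, ?bound⟩
  case card_eq =>
    exact forall_mem_map.mpr fun S _ ↦ S.2
  case indep =>
    refine forall_mem_map.mpr fun S hS ↦ forall_mem_map.mpr fun T hT hadj ↦ ?_
    have adj : (johnsonGraph α k).Adj S T := hadj
    exact indep hS hT adj.ne adj
  case bound =>
    rw [card_map, hJ, div_le_iff₀' (by exact_mod_cast Fintype.card_pos)]
    exact_mod_cast johnsonGraph.choose_le_card_mul_indepNum α k

/-- For all `n ≥ 1` and `0 ≤ k ≤ n`, the Johnson graph `J(n,k)` contains an independent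
set of size at least `(1/n)·C(n,k)`: a family of `k`-element subsets of `[n]`, no two of
which have symmetric difference of size exactly `2`. -/
theorem stmt12 (n k : ℕ) (hn : 1 ≤ n) (hk : k ≤ n) :
    ∃ I : Finset (Finset (Fin n)),
      (∀ S ∈ I, S.card = k) ∧
      (∀ S ∈ I, ∀ T ∈ I, (symmDiff S T).card ≠ 2) ∧
      (Nat.choose n k : ℝ) / n ≤ I.card := by
  have : Nonempty (Fin n) := ⟨⟨0, hn⟩⟩
  simpa only [Fintype.card_fin] using stmt12_general (Fin n) k
end

section
/- Let l ≥ 1, k = 2^l, and let ED be the element distinctness function on the balanced slice of {0,1}^{kl}: ED(x₁, …, x_k) = 1 if and only if the blocks x₁, …, x_k ∈ {0,1}^l are pairwise distinct. Then every 1-subcube of ED (that is, every subcube all of whose members lying in the balanced slice are 1-inputs of ED) contains at most two 1-inputs of ED. -/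
/-- The element distinctness function on `{0,1}^{kl}` with `k = 2^l`: the input is split
into `k` blocks of `l` bits (coordinates indexed by `Fin k × Fin l`), and the output is `1`
iff the blocks are pairwise distinct. -/
def ED (l : ℕ) (x : (Fin (2 ^ l) × Fin l) → Bool) : Bool :=
  decide (Function.Injective fun i : Fin (2 ^ l) => fun j : Fin l => x (i, j))

/-
Swapping a free `1` with a free `0` stays in the subcube and in the slice, so the swapped input
again lists every string exactly once. The row that lost its `1` must reappear, and it can only do
so as the other changed row: the two cells share a column and their rows differ only there. Thus one
of the two cells determines the other, so a member of the subcube that is not the only one has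
exactly one free `1` and one free `0`. Every other member then differs from it exactly on the free
coordinates, which leaves room for just one more.
-/

section Slice

variable {ι κ : Type} [Fintype ι] [Fintype κ]

theorem hamWeight_comp_equiv (x : κ → Bool) (e : ι ≃ κ) : hamWeight (x ∘ e) = hamWeight x :=
  Finset.card_equiv e (by simp)

theorem comp_swap_mem_cubeSlice [DecidableEq ι] {n : ℕ} {x : ι → Bool} (hx : x ∈ cubeSlice ι n)
    (p q : ι) : x ∘ Equiv.swap p q ∈ cubeSlice ι n :=
  (hamWeight_comp_equiv x _).trans hx

theorem hamWeight_strictMono : StrictMono (hamWeight : (ι → Bool) → ℕ) := by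
  intro x y hxy
  obtain ⟨hle, i, hi⟩ := Pi.lt_def.mp hxy
  obtain ⟨hxi, hyi⟩ := Bool.lt_iff.mp hi
  refine Finset.card_lt_card (Finset.ssubset_iff_of_subset ?_ |>.mpr ⟨i, ?_, ?_⟩)
  · exact Finset.monotone_filter_right _ fun j _ => hle j
  · simp [hyi]
  · simp [hxi]

theorem isAntichain_cubeSlice (n : ℕ) : IsAntichain (· ≤ ·) (cubeSlice ι n) :=
  fun _ hx _ hy hne hle => (hamWeight_strictMono (hle.lt_of_ne hne)).ne (hx.trans hy.symm)

end Slice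

namespace ConsistentWith

variable {ι : Type} {C : ι → Option Bool} {x y : ι → Bool}

theorem eq_none_of_ne (hx : ConsistentWith C x) (hy : ConsistentWith C y) {i : ι}
    (hne : x i ≠ y i) : C i = none :=
  Option.eq_none_iff_forall_ne_some.mpr fun b hb => hne ((hx i b hb).trans (hy i b hb).symm)

theorem comp_swap [DecidableEq ι] (hx : ConsistentWith C x) {p q : ι} (hp : C p = none)
    (hq : C q = none) : ConsistentWith C (x ∘ Equiv.swap p q) := by
  intro i b hb
  have hip : i ≠ p := by rintro rfl; simp [hp] at hb
  have hiq : i ≠ q := by rintro rfl; simp [hq] at hb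
  rw [Function.comp_apply, Equiv.swap_apply_of_ne_of_ne hip hiq]
  exact hx i b hb

end ConsistentWith

theorem ED_eq_true_iff_bijective_curry {l : ℕ} {x : Fin (2 ^ l) × Fin l → Bool} :
    ED l x = true ↔ Function.Bijective (Function.curry x) := by
  rw [ED, decide_eq_true_iff, Fintype.bijective_iff_injective_and_card]
  exact (and_iff_left (by simp)).symm

section Swap

open Function

variable {α β A : Type*} [DecidableEq α] [DecidableEq β] {x : α × β → A} {p q r : α × β}

theorem curry_eq_update_of_comp_swap (hx : Injective (curry x))
    (hy : Surjective (curry (x ∘ Equiv.swap p q))) (hpq : x p ≠ x q) :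
    curry x p.1 = update (curry x q.1) q.2 (x p) := by
  obtain ⟨i, hi⟩ := hy (curry x p.1)
  have hrow (j : β) : x (Equiv.swap p q (i, j)) = x (p.1, j) := congrFun hi j
  have hip : i ≠ p.1 := by
    rintro rfl
    have := hrow p.2
    rw [Prod.mk.eta, Equiv.swap_apply_left] at this
    exact hpq this.symm
  have hne_p (j : β) : (i, j) ≠ p := fun h => hip (congrArg Prod.fst h)
  obtain rfl : i = q.1 := by
    by_contra hiq
    have hne_q (j : β) : (i, j) ≠ q := fun h => hiq (congrArg Prod.fst h)
    refine hip (hx (funext fun j => ?_))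
    rw [curry_apply, curry_apply, ← hrow j, Equiv.swap_apply_of_ne_of_ne (hne_p j) (hne_q j)]
  refine eq_update_iff.mpr ⟨?_, fun j hj => ?_⟩
  · rw [curry_apply, ← hrow, Prod.mk.eta, Equiv.swap_apply_right]
  · have hne_q : (q.1, j) ≠ q := fun h => hj (congrArg Prod.snd h)
    rw [curry_apply, curry_apply, ← hrow, Equiv.swap_apply_of_ne_of_ne (hne_p j) hne_q]

theorem snd_eq_of_comp_swap (hx : Injective (curry x))
    (hy : Surjective (curry (x ∘ Equiv.swap p q))) (hpq : x p ≠ x q) : p.2 = q.2 := by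
  by_contra hcol
  have hp : curry x p.1 = update (curry x q.1) q.2 (x p) := curry_eq_update_of_comp_swap hx hy hpq
  have hq : curry x q.1 = update (curry x p.1) p.2 (x q) :=
    curry_eq_update_of_comp_swap hx (Equiv.swap_comm p q ▸ hy) hpq.symm
  refine hpq ?_
  calc x p = curry x q.1 p.2 := (congrFun hp p.2).trans (update_of_ne hcol _ _)
    _ = x q := (congrFun hq p.2).trans (update_self _ _ _)

theorem eq_of_comp_swap (hx : Injective (curry x))
    (hq : Surjective (curry (x ∘ Equiv.swap q p))) (hr : Surjective (curry (x ∘ Equiv.swap r p)))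
    (hqp : x q ≠ x p) (hqr : x q = x r) : q = r := by
  have hrp : x r ≠ x p := hqr ▸ hqp
  refine Prod.ext (hx ?_) ?_
  · rw [curry_eq_update_of_comp_swap hx hq hqp, curry_eq_update_of_comp_swap hx hr hrp, hqr]
  · exact (snd_eq_of_comp_swap hx hq hqp).trans (snd_eq_of_comp_swap hx hr hrp).symm

end Swap

section Subcube

open Function

variable {α β : Type} [DecidableEq α] [DecidableEq β] {S : Set (α × β → Bool)}
  {C : α × β → Option Bool}

theorem ne_iff_eq_none_of_bijective_curry (hanti : IsAntichain (· ≤ ·) S)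
    (hswap : ∀ x ∈ S, ∀ p q, x ∘ Equiv.swap p q ∈ S)
    (hC : ∀ x ∈ S, ConsistentWith C x → Bijective (curry x)) {x y : α × β → Bool}
    (hx : x ∈ S) (hCx : ConsistentWith C x) (hy : y ∈ S) (hCy : ConsistentWith C y)
    (hne : x ≠ y) (r : α × β) : x r ≠ y r ↔ C r = none := by
  refine ⟨hCx.eq_none_of_ne hCy, fun hr => ?_⟩
  obtain ⟨p, hp⟩ : ∃ p, y p < x p := by simpa [Pi.le_def] using hanti hx hy hne
  obtain ⟨q, hq⟩ : ∃ q, x q < y q := by simpa [Pi.le_def] using hanti hy hx hne.symm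
  have hCp : C p = none := hCx.eq_none_of_ne hCy hp.ne'
  have hCq : C q = none := hCx.eq_none_of_ne hCy hq.ne
  have hinj : Injective (curry x) := (hC x hx hCx).injective
  have hsurj {s t : α × β} (hs : C s = none) (ht : C t = none) :
      Surjective (curry (x ∘ Equiv.swap s t)) :=
    (hC _ (hswap x hx s t) (hCx.comp_swap hs ht)).surjective
  have hpq : x p ≠ x q := by
    rw [(Bool.lt_iff.mp hp).2, (Bool.lt_iff.mp hq).1]
    decide
  rcases eq_or_ne (x r) (x q) with hrq | hrq
  · obtain rfl : r = q :=
      eq_of_comp_swap hinj (hsurj hr hCp) (hsurj hCq hCp) (hrq ▸ hpq.symm) hrq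
    exact hq.ne
  · have hrp : x r = x p := (Bool.eq_not_of_ne hrq).trans (Bool.eq_not_of_ne hpq).symm
    obtain rfl : r = p := eq_of_comp_swap hinj (hsurj hr hCq) (hsurj hCp hCq) hrq hrp
    exact hp.ne.symm

-- For finite `α` and `β` the nonempty swap-invariant antichains are exactly the nonempty slices.
theorem stmt15_general (hanti : IsAntichain (· ≤ ·) S)
    (hswap : ∀ x ∈ S, ∀ p q, x ∘ Equiv.swap p q ∈ S)
    (hC : ∀ x ∈ S, ConsistentWith C x → Bijective (curry x)) :
    {x ∈ S | ConsistentWith C x}.encard ≤ 2 := by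
  rcases Set.subsingleton_or_nontrivial {x ∈ S | ConsistentWith C x} with hsub | hnon
  · exact (Set.encard_le_one_iff_subsingleton.mpr hsub).trans one_le_two
  · obtain ⟨x, ⟨hx, hCx⟩, y, ⟨hy, hCy⟩, hxy⟩ := hnon
    refine (Set.encard_le_encard ?_).trans (Set.encard_pair hxy).le
    rintro z ⟨hz, hCz⟩
    refine or_iff_not_imp_left.mpr fun hzx => funext fun r => ?_
    have hiff : x r ≠ y r ↔ x r ≠ z r :=
      (ne_iff_eq_none_of_bijective_curry hanti hswap hC hx hCx hy hCy hxy r).trans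
        (ne_iff_eq_none_of_bijective_curry hanti hswap hC hx hCx hz hCz (Ne.symm hzx) r).symm
    exact (by decide : ∀ a b c : Bool, (a ≠ b ↔ a ≠ c) → c = b) _ _ _ hiff

end Subcube

/-- Every 1-subcube of element distinctness on the balanced slice of `{0,1}^{kl}`
(`k = 2^l`) contains at most two 1-inputs. -/
theorem stmt15 (l : ℕ) (hl : 1 ≤ l) (C : (Fin (2 ^ l) × Fin l) → Option Bool)
    (hC : ∀ x ∈ cubeSlice (Fin (2 ^ l) × Fin l) (2 ^ l * l / 2),
      ConsistentWith C x → ED l x = true) :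
    {x : (Fin (2 ^ l) × Fin l) → Bool |
        x ∈ cubeSlice (Fin (2 ^ l) × Fin l) (2 ^ l * l / 2) ∧
          ConsistentWith C x ∧ ED l x = true}.ncard ≤ 2 := by
  have hle := stmt15_general (isAntichain_cubeSlice _) (fun _ => comp_swap_mem_cubeSlice)
    fun x hx hCx => ED_eq_true_iff_bijective_curry.mp (hC x hx hCx)
  exact ENat.toNat_le_of_le_natCast (hle.trans' (Set.encard_le_encard fun _ hx => ⟨hx.1, hx.2.1⟩))
end
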